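/- arXiv:math/0301347 — 5 statements merged into one kernel-verified Lean document; each statement's English description precedes it below -/
import Mathlib

section
/- Let Ā be a homomorphic image of a ring A. For any right Ā-module X (viewed as an A-module by restriction of scalars) and any finite projective right A-module P, one has Ext^i_A(X,P) = 0 for all i < grade_A(Ā). -/
open CategoryTheory MulOpposite

attribute [local instance] HasDerivedCategory.standard
attribute [local instance] CategoryTheory.hasExt_of_hasDerivedCategory

set_option maxHeartbeats 1000000
set_option synthInstance.maxHeartbeats 400000
set_option linter.unusedSectionVars false
set_option linter.unusedVariables false

noncomputable section
namespace MoritaHochschild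

/-! ### Grade of a module, via vanishing of Ext -/

/-- The grade of a right `R`-module `X`:
`grade_R X = inf { i | Ext^i_R(X, R) ≠ 0 }`, as an element of `ℕ∞`. -/
def rgrade (R : Type) [Ring R] (X : Type) [AddCommGroup X] [Module Rᵐᵒᵖ X] : ℕ∞ :=
  sInf {i : ℕ∞ | ∃ n : ℕ, i = n ∧
    ¬ Subsingleton (Abelian.Ext (ModuleCat.of Rᵐᵒᵖ X) (ModuleCat.of Rᵐᵒᵖ R) n)}

/-- The grade of a left `R`-module `X`. -/
def lgrade (R : Type) [Ring R] (X : Type) [AddCommGroup X] [Module R X] : ℕ∞ :=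
  sInf {i : ℕ∞ | ∃ n : ℕ, i = n ∧
    ¬ Subsingleton (Abelian.Ext (ModuleCat.of R X) (ModuleCat.of R R) n)}

universe w v u

/-- `Ext` classes out of a coproduct are detected on the summands. -/
lemma ext_eq_zero_of_coproduct {C : Type u} [Category.{v} C] [Abelian C] [HasExt.{w} C]
    [EnoughInjectives C] {I : Type*} {M : I → C} {S : C} (ι : ∀ k, M k ⟶ S)
    (hglue : ∀ (Y : C) (f : ∀ k, M k ⟶ Y), ∃ g : S ⟶ Y, ∀ k, ι k ≫ g = f k)
    (hepi : ∀ (Y : C) (g : S ⟶ Y), (∀ k, ι k ≫ g = 0) → g = 0) (n : ℕ) :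
    ∀ (Y : C) (x : Abelian.Ext.{w} S Y n),
      (∀ k, (Abelian.Ext.mk₀ (ι k)).comp x (zero_add n) = 0) → x = 0 := by
  induction n with
  | zero =>
    intro Y x hx
    obtain ⟨g, rfl⟩ := Abelian.Ext.mk₀_bijective _ _ |>.2 x
    rw [Abelian.Ext.mk₀_eq_zero_iff]
    apply hepi
    intro k
    have := hx k
    rwa [Abelian.Ext.mk₀_comp_mk₀, Abelian.Ext.mk₀_eq_zero_iff] at this
  | succ n ih =>
    intro Y x hx
    let T : ShortComplex C := ShortComplex.mk (Injective.ι Y) (Limits.cokernel.π (Injective.ι Y))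
      (Limits.cokernel.condition _)
    have hT : T.ShortExact :=
      { exact := ShortComplex.exact_cokernel _
        mono_f := inferInstanceAs (Mono (Injective.ι Y))
        epi_g := inferInstanceAs (Epi (Limits.cokernel.π (Injective.ι Y))) }
    have : Injective T.X₂ := inferInstanceAs (Injective (Injective.under Y))
    obtain ⟨x₃, rfl⟩ := Abelian.Ext.covariant_sequence_exact₁ _ hT x
      (Abelian.Ext.eq_zero_of_injective _) rfl
    have h2 : ∀ k, ∃ y : Abelian.Ext.{w} (M k) T.X₂ n,
        y.comp (Abelian.Ext.mk₀ T.g) (add_zero n) =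
          (Abelian.Ext.mk₀ (ι k)).comp x₃ (zero_add n) := by
      intro k
      apply Abelian.Ext.covariant_sequence_exact₃ _ hT _ rfl
      rw [Abelian.Ext.comp_assoc _ _ _ (zero_add n) rfl (by omega)]
      exact hx k
    choose y hy using h2
    have h3 : ∃ z : Abelian.Ext.{w} S T.X₂ n,
        ∀ k, (Abelian.Ext.mk₀ (ι k)).comp z (zero_add n) = y k := by
      cases n with
      | zero =>
        choose f hf using fun k => (Abelian.Ext.mk₀_bijective _ _).2 (y k)
        obtain ⟨g, hg⟩ := hglue _ f
        refine ⟨Abelian.Ext.mk₀ g, fun k => ?_⟩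
        rw [Abelian.Ext.mk₀_comp_mk₀, hg, hf]
      | succ m =>
        refine ⟨0, fun k => ?_⟩
        rw [Abelian.Ext.eq_zero_of_injective (y k), Abelian.Ext.comp_zero]
    obtain ⟨z, hz⟩ := h3
    have h4 : x₃ - z.comp (Abelian.Ext.mk₀ T.g) (add_zero n) = 0 := by
      apply ih
      intro k
      rw [sub_eq_add_neg, Abelian.Ext.comp_add, Abelian.Ext.comp_neg,
        ← Abelian.Ext.comp_assoc _ _ _ (zero_add n) (add_zero n) (by omega), hz, hy,
        add_neg_cancel]
    rw [sub_eq_zero] at h4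
    rw [h4, Abelian.Ext.comp_assoc _ _ _ (add_zero n) (zero_add 1) (by omega),
      hT.comp_extClass, Abelian.Ext.comp_zero]

/-- Vanishing for all modules killed by the kernel of `p`. -/
lemma ext_vanish_of_killed (A : Type) [Ring A] (Abar : Type) [Ring Abar]
    [HasExt.{w} (ModuleCat.{0} Aᵐᵒᵖ)]
    (p : A →+* Abar) (hsurj : Function.Surjective p)
    [Module Aᵐᵒᵖ Abar] (hAbar : ∀ (a : A) (y : Abar), (op a) • y = y * p a)
    (Y : ModuleCat.{0} Aᵐᵒᵖ) (i : ℕ)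
    (hY : ∀ j ≤ i, Subsingleton (Abelian.Ext.{w} (ModuleCat.of Aᵐᵒᵖ Abar) Y j)) :
    ∀ (X : ModuleCat.{0} Aᵐᵒᵖ), (∀ a : A, p a = 0 → ∀ x : X, op a • x = 0) →
      Subsingleton (Abelian.Ext.{w} X Y i) := by
  have key : ∀ (I : Type) (j : ℕ), j ≤ i →
      ∀ x : Abelian.Ext.{w} (ModuleCat.of Aᵐᵒᵖ (I →₀ Abar)) Y j, x = 0 := by
    intro I j hj x
    refine ext_eq_zero_of_coproduct (M := fun _ : I => ModuleCat.of Aᵐᵒᵖ Abar)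
      (fun k => ModuleCat.ofHom (Finsupp.lsingle k)) ?_ ?_ j Y x ?_
    · intro Z f
      refine ⟨ModuleCat.ofHom (Finsupp.lsum ℕ fun k => (f k).hom), fun k => ?_⟩
      ext y
      simp
    · intro Z g hg
      apply ModuleCat.hom_ext
      apply Finsupp.lhom_ext'
      intro k
      exact congrArg ModuleCat.Hom.hom (hg k)
    · intro k
      have := hY j hj
      exact Subsingleton.elim _ _
  have hcover : ∀ (X : ModuleCat.{0} Aᵐᵒᵖ), (∀ a : A, p a = 0 → ∀ x : X, op a • x = 0) →
      ∃ f : ModuleCat.of Aᵐᵒᵖ (X →₀ Abar) ⟶ X, Epi f := by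
    intro X hX
    have hwd : ∀ (a b : A) (x : X), p a = p b → op a • x = op b • x := by
      intro a b x h
      have := hX (a - b) (by rw [map_sub, h, sub_self]) x
      rwa [MulOpposite.op_sub, sub_smul, sub_eq_zero] at this
    let s := Function.surjInv hsurj
    have hs : ∀ y, p (s y) = y := Function.surjInv_eq hsurj
    let φ : X → (Abar →ₗ[Aᵐᵒᵖ] X) := fun x =>
      { toFun := fun y => op (s y) • x
        map_add' := fun y z => by
          rw [← add_smul, ← MulOpposite.op_add]
          apply hwd
          rw [map_add, hs, hs, hs]
        map_smul' := fun c y => by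
          rw [RingHom.id_apply, ← mul_smul]
          obtain ⟨c, rfl⟩ := op_surjective c
          rw [← op_mul]
          apply hwd
          rw [map_mul, hs, hs, hAbar] }
    refine ⟨ModuleCat.ofHom (Finsupp.lsum ℕ φ), ?_⟩
    rw [ModuleCat.epi_iff_surjective]
    intro x
    refine ⟨Finsupp.single x 1, ?_⟩
    have h1 : op (s 1) • x = op (1 : A) • x := hwd _ _ _ (by rw [hs, map_one])
    rw [op_one, one_smul] at h1
    change Finsupp.lsum ℕ φ (Finsupp.single x 1) = x
    rw [Finsupp.lsum_single]
    exact h1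
  induction i with
  | zero =>
    intro X hX
    obtain ⟨f, hf⟩ := hcover X hX
    refine subsingleton_of_forall_eq 0 fun x => ?_
    apply Abelian.Ext.precomp_mk₀_injective_of_epi Y f
    rw [map_zero]
    exact key _ _ le_rfl _
  | succ i ih =>
    intro X hX
    obtain ⟨f, hf⟩ := hcover X hX
    let T : ShortComplex (ModuleCat.{0} Aᵐᵒᵖ) :=
      ShortComplex.mk (Limits.kernel.ι f) f (Limits.kernel.condition _)
    have hT : T.ShortExact :=
      { exact := ShortComplex.exact_kernel _
        mono_f := inferInstanceAs (Mono (Limits.kernel.ι f))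
        epi_g := hf }
    have hK : Subsingleton (Abelian.Ext.{w} T.X₁ Y i) := by
      apply ih (fun j hj => hY j (by omega)) (fun I j hj => key I j (by omega))
      intro a ha x
      have hinj : Function.Injective (Limits.kernel.ι f) :=
        (ModuleCat.mono_iff_injective _).1 inferInstance
      apply hinj
      rw [map_smul, map_zero]
      ext k
      change op a • (_ : Abar) = 0
      rw [hAbar, ha, mul_zero]
    refine subsingleton_of_forall_eq 0 fun x => ?_
    obtain ⟨y, rfl⟩ := Abelian.Ext.contravariant_sequence_exact₃ hT Y x
      (key _ _ le_rfl _) (add_comm 1 i)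
    rw [Subsingleton.elim y 0, Abelian.Ext.comp_zero]

/-- Vanishing passes from the regular right module to finite projective ones. -/
lemma ext_vanish_projective (A : Type) [Ring A] [HasExt.{w} (ModuleCat.{0} Aᵐᵒᵖ)]
    (X : ModuleCat.{0} Aᵐᵒᵖ) (P : Type) [AddCommGroup P] [Module Aᵐᵒᵖ P]
    (hfin : Module.Finite Aᵐᵒᵖ P) (hproj : Module.Projective Aᵐᵒᵖ P) (i : ℕ)
    (h : Subsingleton (Abelian.Ext.{w} X (ModuleCat.of Aᵐᵒᵖ A) i)) :
    Subsingleton (Abelian.Ext.{w} X (ModuleCat.of Aᵐᵒᵖ P) i) := by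
  obtain ⟨n, f, hf⟩ := Module.Finite.exists_fin' Aᵐᵒᵖ P
  obtain ⟨s, hs⟩ := Module.projective_lifting_property f LinearMap.id hf
  let u : Fin n → (P →ₗ[Aᵐᵒᵖ] A) := fun k =>
    { toFun := fun x => unop (s x k)
      map_add' := fun x y => by simp
      map_smul' := fun c x => by simp }
  let v : Fin n → (A →ₗ[Aᵐᵒᵖ] P) := fun k =>
    { toFun := fun a => op a • f (Pi.single k 1)
      map_add' := fun x y => by simp [add_smul]
      map_smul' := fun c x => by simp [mul_smul] }
  have hid : 𝟙 (ModuleCat.of Aᵐᵒᵖ P) = ∑ k, ModuleCat.ofHom (u k) ≫ ModuleCat.ofHom (v k) := by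
    apply ModuleCat.hom_ext
    ext x
    have h1 : f (s x) = x := LinearMap.congr_fun hs x
    rw [ModuleCat.hom_sum, LinearMap.sum_apply]
    change x = ∑ k, s x k • f (Pi.single k 1)
    conv_lhs => rw [← h1, pi_eq_sum_univ' (s x), map_sum]
    refine Finset.sum_congr rfl fun k _ => ?_
    rw [map_smul]
  refine subsingleton_of_forall_eq 0 fun x => ?_
  rw [← Abelian.Ext.comp_mk₀_id x, hid, Abelian.Ext.mk₀_sum, Abelian.Ext.comp_sum]
  refine Finset.sum_eq_zero fun k _ => ?_
  rw [← Abelian.Ext.mk₀_comp_mk₀,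
    ← Abelian.Ext.comp_assoc _ _ _ (add_zero i) (add_zero 0) (by omega),
    Subsingleton.elim (x.comp _ _) 0, Abelian.Ext.zero_comp]

/-- Let `Ā` be a homomorphic image of the ring `A`. For any right
`Ā`-module `X` (viewed as an `A`-module by restriction of scalars along `p`) and any
finitely generated projective right `A`-module `P`, `Ext^i_A(X, P) = 0` for
`i < grade_A Ā`. -/
theorem ext_into_finite_projective_vanishes_below_grade
    (A : Type) [Ring A] (Abar : Type) [Ring Abar]
    (p : A →+* Abar) (hsurj : Function.Surjective p)
    [Module Aᵐᵒᵖ Abar] (hAbar : ∀ (a : A) (y : Abar), (op a) • y = y * p a)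
    (X : Type) [AddCommGroup X] [Module Abarᵐᵒᵖ X] [Module Aᵐᵒᵖ X]
    (hX : ∀ (a : A) (x : X), (op a) • x = (op (p a)) • x)
    (P : Type) [AddCommGroup P] [Module Aᵐᵒᵖ P]
    (hfin : Module.Finite Aᵐᵒᵖ P) (hproj : Module.Projective Aᵐᵒᵖ P)
    (i : ℕ) (hi : (i : ℕ∞) < rgrade A Abar) :
    Subsingleton (Abelian.Ext (ModuleCat.of Aᵐᵒᵖ X) (ModuleCat.of Aᵐᵒᵖ P) i) := by
  apply ext_vanish_projective A _ P hfin hproj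
  apply ext_vanish_of_killed A Abar p hsurj hAbar
  · intro j hj
    by_contra hne
    have h1 : rgrade A Abar ≤ (j : ℕ∞) := sInf_le ⟨j, rfl, hne⟩
    have h2 : (j : ℕ∞) ≤ (i : ℕ∞) := by exact_mod_cast hj
    exact absurd hi (not_lt.2 (h1.trans h2))
  · intro a ha x
    change op a • (x : X) = 0
    rw [hX, ha, op_zero, zero_smul]

end MoritaHochschild
end
end

section
/- Let (C,e) be a Morita context with A = eCe, M = e'Ce, and C̄ = C/CeC. The canonical morphism of Morita contexts α_C : C → End_{eCe}(Ce) = End_A(M ⊕ A), given by left multiplication of C on the right A-module Ce = M ⊕ A, satisfies: (1) α_C is injective if and only if Hom_C(C̄,C) = 0, if and only if grade_C C̄ ≥ 1; (2) α_C is bijective if and only if Ext^i_C(C̄,C) = 0 for i = 0,1, if and only if grade_C C̄ ≥ 2. In particular, (C,e) is a right Auslander context if and only if grade_C C̄ ≥ 2. -/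
open CategoryTheory MulOpposite

attribute [local instance] HasDerivedCategory.standard
attribute [local instance] CategoryTheory.hasExt_of_hasDerivedCategory

set_option maxHeartbeats 1000000
set_option synthInstance.maxHeartbeats 400000
set_option linter.unusedSectionVars false
set_option linter.unusedVariables false

noncomputable section
namespace MoritaHochschild

/-! ### Corners `pCq` of a ring with idempotents `p`, `q` -/

variable {C : Type} [Ring C]

instance factOneIdem : Fact (IsIdempotentElem (1 : C)) := ⟨IsIdempotentElem.one⟩

instance factOneSubIdem {e : C} [he : Fact (IsIdempotentElem e)] :
    Fact (IsIdempotentElem (1 - e)) := ⟨he.out.one_sub⟩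

/-- The subset `pCq` of a ring `C`; for idempotents `p`, `q` this is the
corresponding "corner" of `C`. -/
def Hand (p q : C) : Type := {x : C // p * x * q = x}

namespace Hand

variable {p q r : C}

def val (x : Hand p q) : C := x.1

lemma prop (x : Hand p q) : p * x.val * q = x.val := x.2

lemma val_injective : Function.Injective (val (p := p) (q := q)) :=
  fun _ _ h => Subtype.ext h

def mk (x : C) (h : p * x * q = x) : Hand p q := ⟨x, h⟩

instance : Zero (Hand p q) := ⟨⟨0, by simp⟩⟩
instance : Add (Hand p q) :=
  ⟨fun x y => ⟨x.val + y.val, by rw [mul_add, add_mul, x.prop, y.prop]⟩⟩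
instance : Neg (Hand p q) :=
  ⟨fun x => ⟨-x.val, by rw [mul_neg, neg_mul, x.prop]⟩⟩
instance : Sub (Hand p q) :=
  ⟨fun x y => ⟨x.val - y.val, by rw [mul_sub, sub_mul, x.prop, y.prop]⟩⟩
instance : SMul ℕ (Hand p q) :=
  ⟨fun n x => ⟨n • x.val, by rw [mul_smul_comm, smul_mul_assoc, x.prop]⟩⟩
instance : SMul ℤ (Hand p q) :=
  ⟨fun n x => ⟨n • x.val, by rw [mul_smul_comm, smul_mul_assoc, x.prop]⟩⟩

instance : AddCommGroup (Hand p q) :=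
  val_injective.addCommGroup val rfl (fun _ _ => rfl) (fun _ => rfl) (fun _ _ => rfl)
    (fun _ _ => rfl) (fun _ _ => rfl)

/-- `val` as an additive map. -/
def valHom : Hand p q →+ C where
  toFun := val
  map_zero' := rfl
  map_add' := fun _ _ => rfl

@[simp] lemma val_add (x y : Hand p q) : (x + y).val = x.val + y.val := rfl
@[simp] lemma val_zero : (0 : Hand p q).val = 0 := rfl

section Facts

variable [hp : Fact (IsIdempotentElem p)] [hq : Fact (IsIdempotentElem q)]
    [hr : Fact (IsIdempotentElem r)]

lemma left_absorb (x : Hand p q) : p * x.val = x.val := by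
  conv_lhs => rw [← x.prop]
  rw [← mul_assoc, ← mul_assoc, hp.out.eq]
  exact x.prop

lemma right_absorb (x : Hand p q) : x.val * q = x.val := by
  conv_lhs => rw [← x.prop]
  rw [mul_assoc, mul_assoc, hq.out.eq, ← mul_assoc]
  exact x.prop

/-- Multiplication `pCq × qCr → pCr`. -/
def hmul (x : Hand p q) (y : Hand q r) : Hand p r :=
  ⟨x.val * y.val, by
    rw [← mul_assoc, left_absorb x, mul_assoc, right_absorb y]⟩

@[simp] lemma val_hmul (x : Hand p q) (y : Hand q r) :
    (hmul x y).val = x.val * y.val := rfl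

/-- Compression of an element of `C` into the corner `pCq`. -/
def compress (p q : C) [hp : Fact (IsIdempotentElem p)] [hq : Fact (IsIdempotentElem q)]
    (x : C) : Hand p q :=
  ⟨p * x * q, by
    have h1 : p * (p * x * q) * q = (p * p) * x * (q * q) := by noncomm_ring
    rw [h1, hp.out.eq, hq.out.eq]⟩

@[simp] lemma val_compress (x : C) : (compress p q x).val = p * x * q := rfl

instance : Mul (Hand p p) := ⟨fun x y => hmul x y⟩

instance : One (Hand p p) := ⟨⟨p, by rw [hp.out.eq, hp.out.eq]⟩⟩

@[simp] lemma val_mul (x y : Hand p p) : (x * y).val = x.val * y.val := rfl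
@[simp] lemma val_one : (1 : Hand p p).val = p := rfl

/-- The corner `pCp` is a ring, with unit `p`. -/
instance ring : Ring (Hand p p) :=
  { (inferInstance : AddCommGroup (Hand p p)) with
    mul := (· * ·)
    left_distrib := fun x y z => Subtype.ext (mul_add x.val y.val z.val)
    right_distrib := fun x y z => Subtype.ext (add_mul x.val y.val z.val)
    zero_mul := fun x => Subtype.ext (zero_mul x.val)
    mul_zero := fun x => Subtype.ext (mul_zero x.val)
    mul_assoc := fun x y z => Subtype.ext (mul_assoc x.val y.val z.val)
    one := 1
    one_mul := fun x => Subtype.ext (left_absorb x)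
    mul_one := fun x => Subtype.ext (right_absorb x) }

/-- `pCq` is a left module over the corner ring `pCp`. -/
instance : Module (Hand p p) (Hand p q) where
  smul a x := hmul a x
  one_smul x := Subtype.ext (left_absorb x)
  mul_smul a b x := Subtype.ext (mul_assoc a.val b.val x.val)
  smul_zero a := Subtype.ext (mul_zero a.val)
  smul_add a x y := Subtype.ext (mul_add a.val x.val y.val)
  add_smul a b x := Subtype.ext (add_mul a.val b.val x.val)
  zero_smul x := Subtype.ext (zero_mul x.val)

/-- `pCq` is a right module over the corner ring `qCq`. -/
instance : Module (Hand q q)ᵐᵒᵖ (Hand p q) where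
  smul a x := hmul x a.unop
  one_smul x := Subtype.ext (right_absorb x)
  mul_smul a b x := Subtype.ext (mul_assoc x.val b.unop.val a.unop.val).symm
  smul_zero a := Subtype.ext (zero_mul a.unop.val)
  smul_add a x y := Subtype.ext (add_mul x.val y.val a.unop.val)
  add_smul a b x := Subtype.ext (mul_add x.val a.unop.val b.unop.val)
  zero_smul x := Subtype.ext (mul_zero x.val)

@[simp] lemma val_smul (a : Hand p p) (x : Hand p q) : (a • x).val = a.val * x.val := rfl

@[simp] lemma val_op_smul (a : (Hand q q)ᵐᵒᵖ) (x : Hand p q) :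
    (a • x).val = x.val * a.unop.val := rfl

/-- `pC = pC1` is a right module over `C` itself. -/
instance : Module Cᵐᵒᵖ (Hand p (1 : C)) where
  smul c x := ⟨x.val * c.unop, by rw [mul_one, ← mul_assoc, left_absorb x]⟩
  one_smul x := Subtype.ext (mul_one x.val)
  mul_smul a b x := Subtype.ext (mul_assoc x.val b.unop a.unop).symm
  smul_zero a := Subtype.ext (zero_mul a.unop)
  smul_add a x y := Subtype.ext (add_mul x.val y.val a.unop)
  add_smul a b x := Subtype.ext (mul_add x.val a.unop b.unop)
  zero_smul x := Subtype.ext (mul_zero x.val)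

@[simp] lemma val_op_smul' (c : Cᵐᵒᵖ) (x : Hand p (1 : C)) :
    (c • x).val = x.val * c.unop := rfl

/-- `Cq = 1Cq` is a left module over `C` itself. -/
instance : Module C (Hand (1 : C) q) where
  smul c x := ⟨c * x.val, by rw [one_mul, mul_assoc, right_absorb x]⟩
  one_smul x := Subtype.ext (one_mul x.val)
  mul_smul a b x := Subtype.ext (mul_assoc a b x.val)
  smul_zero a := Subtype.ext (mul_zero a)
  smul_add a x y := Subtype.ext (mul_add a x.val y.val)
  add_smul a b x := Subtype.ext (add_mul a b x.val)
  zero_smul x := Subtype.ext (zero_mul x.val)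

@[simp] lemma val_smul' (c : C) (x : Hand (1 : C) q) :
    (c • x).val = c * x.val := rfl

end Facts

end Hand
/-! ### The Morita defect `C̄ = C/CeC` -/

/-- The Morita defect: the quotient ring `C/CeC` of `C` by the two-sided ideal
generated by the idempotent `e`. -/
def CBar (e : C) : Type := (TwoSidedIdeal.span {e}).ringCon.Quotient

instance (e : C) : Ring (CBar e) :=
  inferInstanceAs (Ring (TwoSidedIdeal.span {e}).ringCon.Quotient)

/-- The quotient map `C → C/CeC`. -/
def cbarMk (e : C) : C →+* CBar e := RingCon.mk' _

lemma cbarMk_surjective (e : C) : Function.Surjective (cbarMk e) :=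
  fun x => Quotient.inductionOn' x (fun c => ⟨c, rfl⟩)

lemma cbarMk_eq_zero_iff (e : C) (x : C) :
    cbarMk e x = 0 ↔ x ∈ TwoSidedIdeal.span {e} := by
  have : (0 : CBar e) = cbarMk e 0 := rfl
  rw [this]
  constructor
  · intro h
    have h' := (RingCon.eq _).1 h
    simpa using (TwoSidedIdeal.rel_iff _ _ _).1 h'
  · intro h
    exact (RingCon.eq _).2 ((TwoSidedIdeal.rel_iff _ _ _).2 (by simpa using h))

/-- `C/CeC` as a right `C`-module. -/
noncomputable instance (e : C) : Module Cᵐᵒᵖ (CBar e) :=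
  Module.compHom (CBar e) (RingHom.op (cbarMk e))

lemma op_smul_cbar (e : C) (c : C) (x : CBar e) :
    (MulOpposite.op c) • x = x * cbarMk e c := rfl

/-- `C/CeC` as a left `C`-module. -/
noncomputable instance cbarLeftModule (e : C) : Module C (CBar e) :=
  Module.compHom (CBar e) (cbarMk e)

lemma smul_cbar (e : C) (c : C) (x : CBar e) :
    c • x = cbarMk e c * x := rfl
/-! ### Helper lemmas -/

lemma ext_zero_subsingleton_iff {R : Type} [Ring R] (X Y : Type) [AddCommGroup X] [Module R X]
    [AddCommGroup Y] [Module R Y] :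
    Subsingleton (Abelian.Ext (ModuleCat.of R X) (ModuleCat.of R Y) 0) ↔
      Subsingleton (X →ₗ[R] Y) :=
  (Abelian.Ext.homEquiv₀.trans ModuleCat.homEquiv).subsingleton_congr

lemma ext_one_subsingleton_iff {R : Type} [Ring R] (P X Y : Type) [AddCommGroup P] [Module R P]
    [AddCommGroup X] [Module R X] [AddCommGroup Y] [Module R Y] [Module.Projective R P]
    (q : P →ₗ[R] X) (hq : Function.Surjective q) :
    Subsingleton (Abelian.Ext (ModuleCat.of R X) (ModuleCat.of R Y) 1) ↔
      ∀ φ : LinearMap.ker q →ₗ[R] Y, ∃ ψ : P →ₗ[R] Y, ∀ x, ψ x.1 = φ x := by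
  let S : ShortComplex (ModuleCat.{0} R) :=
    ModuleCat.shortComplexOfCompEqZero (LinearMap.ker q).subtype q (by ext x; exact x.2)
  have hS : S.ShortExact :=
    { exact := by
        rw [ShortComplex.ShortExact.moduleCat_exact_iff_function_exact]
        exact LinearMap.exact_subtype_ker_map q
      mono_f := (ModuleCat.mono_iff_injective _).2 Subtype.val_injective
      epi_g := (ModuleCat.epi_iff_surjective _).2 hq }
  have : Projective S.X₂ :=
    inferInstanceAs (Projective (ModuleCat.of R P))
  constructor
  · intro h φ
    obtain ⟨x₂, hx₂⟩ := Abelian.Ext.contravariant_sequence_exact₁ hS (ModuleCat.of R Y)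
      (Abelian.Ext.mk₀ (ModuleCat.ofHom φ : S.X₁ ⟶ ModuleCat.of R Y)) (add_zero 1)
      (h.elim _ _)
    obtain ⟨g, rfl⟩ := (Abelian.Ext.mk₀_bijective _ _).2 x₂
    rw [Abelian.Ext.mk₀_comp_mk₀] at hx₂
    have h2 := (Abelian.Ext.mk₀_bijective _ _).1 hx₂
    exact ⟨g.hom, fun x => congrArg (fun k => k.hom x) h2⟩
  · intro h
    refine subsingleton_of_forall_eq 0 fun x₃ => ?_
    obtain ⟨x₁, hx₁⟩ := Abelian.Ext.contravariant_sequence_exact₃ hS (ModuleCat.of R Y) x₃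
      (Abelian.Ext.eq_zero_of_projective _) (add_zero 1)
    obtain ⟨g, rfl⟩ := (Abelian.Ext.mk₀_bijective _ _).2 x₁
    obtain ⟨ψ, hψ⟩ := h g.hom
    have hg : g = S.f ≫ (ModuleCat.ofHom ψ : S.X₂ ⟶ ModuleCat.of R Y) := by
      apply ModuleCat.hom_ext
      ext x
      exact (hψ x).symm
    rw [← hx₁, hg, ← Abelian.Ext.mk₀_comp_mk₀,
      ShortComplex.ShortExact.extClass_comp_assoc]

lemma one_le_rgrade_iff (R : Type) [Ring R] (X : Type) [AddCommGroup X] [Module Rᵐᵒᵖ X] :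
    1 ≤ rgrade R X ↔
      Subsingleton (Abelian.Ext (ModuleCat.of Rᵐᵒᵖ X) (ModuleCat.of Rᵐᵒᵖ R) 0) := by
  unfold rgrade
  rw [le_sInf_iff]
  constructor
  · intro h
    by_contra h0
    have := h ((0 : ℕ) : ℕ∞) ⟨0, rfl, h0⟩
    simp at this
  · rintro h b ⟨n, rfl, hn⟩
    rcases n with _ | n
    · exact absurd h hn
    · exact_mod_cast Nat.le_add_left 1 n

lemma two_le_rgrade_iff (R : Type) [Ring R] (X : Type) [AddCommGroup X] [Module Rᵐᵒᵖ X] :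
    2 ≤ rgrade R X ↔
      (Subsingleton (Abelian.Ext (ModuleCat.of Rᵐᵒᵖ X) (ModuleCat.of Rᵐᵒᵖ R) 0) ∧
       Subsingleton (Abelian.Ext (ModuleCat.of Rᵐᵒᵖ X) (ModuleCat.of Rᵐᵒᵖ R) 1)) := by
  unfold rgrade
  rw [le_sInf_iff]
  constructor
  · intro h
    constructor
    · by_contra h0
      have h1 : ((2 : ℕ) : ℕ∞) ≤ ((0 : ℕ) : ℕ∞) := h ((0 : ℕ) : ℕ∞) ⟨0, rfl, h0⟩
      have := Nat.cast_le.1 h1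
      omega
    · by_contra h0
      have h1 : ((2 : ℕ) : ℕ∞) ≤ ((1 : ℕ) : ℕ∞) := h ((1 : ℕ) : ℕ∞) ⟨1, rfl, h0⟩
      have := Nat.cast_le.1 h1
      omega
  · rintro ⟨h0, h1⟩ b ⟨n, rfl, hn⟩
    rcases n with _ | _ | n
    · exact absurd h0 hn
    · exact absurd h1 hn
    · exact_mod_cast Nat.le_add_left 2 n

instance projective_right (R : Type) [Ring R] : Module.Projective Rᵐᵒᵖ R :=
  let E : Rᵐᵒᵖ ≃ₗ[Rᵐᵒᵖ] R :=
    { toFun := fun x : Rᵐᵒᵖ => (x.unop : R)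
      invFun := fun x => op x
      map_add' := fun _ _ => rfl
      map_smul' := fun _ _ => rfl
      left_inv := fun _ => rfl
      right_inv := fun _ => rfl }
  Module.Projective.of_equiv E

/-- The quotient map `C → C/CeC`, right `C`-linear. -/
def qmap (e : C) : C →ₗ[Cᵐᵒᵖ] CBar e where
  toFun := cbarMk e
  map_add' := map_add _
  map_smul' := fun c x => map_mul (cbarMk e) x c.unop

lemma qmap_mul_mul (e a b : C) : qmap e (a * e * b) = 0 := by
  refine (cbarMk_eq_zero_iff e _).2 ?_
  exact TwoSidedIdeal.mul_mem_right _ _ _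
    (TwoSidedIdeal.mul_mem_left _ _ _ (TwoSidedIdeal.subset_span rfl))

lemma qmap_induction (e : C) (p : C → Prop) (h0 : p 0) (ha : ∀ x y, p x → p y → p (x + y))
    (hneg : ∀ x, p x → p (-x)) (hm : ∀ a b, p (a * e * b)) (x : C) (hx : qmap e x = 0) : p x := by
  have hx' := (cbarMk_eq_zero_iff e x).1 hx
  rw [TwoSidedIdeal.mem_span_iff_mem_addSubgroup_closure] at hx'
  induction hx' using AddSubgroup.closure_induction with
  | mem y hy =>
    obtain ⟨z, ⟨a, -, e', he, rfl⟩, b, -, rfl⟩ := hy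
    rw [Set.mem_singleton_iff] at he
    subst he
    exact hm a b
  | zero => exact h0
  | add y z hy hz h1 h2 =>
    exact ha _ _ (h1 ((cbarMk_eq_zero_iff e y).2
      (TwoSidedIdeal.mem_span_iff_mem_addSubgroup_closure.2 hy)))
      (h2 ((cbarMk_eq_zero_iff e z).2
      (TwoSidedIdeal.mem_span_iff_mem_addSubgroup_closure.2 hz)))
  | neg y hy h1 => exact hneg _ (h1 ((cbarMk_eq_zero_iff e y).2
      (TwoSidedIdeal.mem_span_iff_mem_addSubgroup_closure.2 hy)))

lemma hom_subsingleton_iff (e : C) :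
    Subsingleton (CBar e →ₗ[Cᵐᵒᵖ] C) ↔ ∀ a : C, (∀ c, a * c * e = 0) → a = 0 := by
  constructor
  · intro h a ha
    have key : ∀ x, qmap e x = 0 → a * x = 0 := by
      refine qmap_induction e _ (mul_zero a) ?_ ?_ ?_
      · intro x y hx hy; rw [mul_add, hx, hy, add_zero]
      · intro x hx; rw [mul_neg, hx, neg_zero]
      · intro x y; rw [← mul_assoc, ← mul_assoc, ha, zero_mul]
    let L : C →ₗ[Cᵐᵒᵖ] C :=
      { toFun := fun x => a * x
        map_add' := mul_add a
        map_smul' := fun c x => (mul_assoc a x c.unop).symm }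
    have hs : Function.Surjective (qmap e) := cbarMk_surjective e
    let g := ((LinearMap.ker (qmap e)).liftQ L (fun x hx => key x hx)).comp
      ((qmap e).quotKerEquivOfSurjective hs).symm.toLinearMap
    have h0 : g = 0 := h.elim _ _
    have h1 : g (qmap e 1) = a := by
      have : ((qmap e).quotKerEquivOfSurjective hs).symm (qmap e 1) =
          (LinearMap.ker (qmap e)).mkQ 1 := by
        rw [LinearEquiv.symm_apply_eq]; rfl
      change ((LinearMap.ker (qmap e)).liftQ L (fun x hx => key x hx))
        (((qmap e).quotKerEquivOfSurjective hs).symm (qmap e 1)) = a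
      rw [this]
      exact mul_one a
    rw [← h1, h0]; rfl
  · intro h
    refine subsingleton_of_forall_eq 0 fun g => ?_
    have key : g (qmap e 1) = 0 := by
      apply h
      intro c
      have h1 : g (qmap e (1 * c * e)) = g (qmap e 1) * c * e := by
        have : (1 * c * e : C) = op (c * e) • (1 : C) := by
          simp [mul_assoc]
        rw [this, map_smul, map_smul]
        simp [mul_assoc]
      rw [← h1]
      have h2 := qmap_mul_mul e (1 * c) 1
      rw [mul_one] at h2
      rw [h2, map_zero]
    ext x
    obtain ⟨c, rfl⟩ := cbarMk_surjective e x
    have : (cbarMk e c) = op c • qmap e 1 := by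
      rw [← map_smul]; simp; rfl
    rw [this, map_smul, key]; simp

section Alpha

variable (e : C) [he : Fact (IsIdempotentElem e)]
    (α : C →+* Module.End (Hand e e)ᵐᵒᵖ (Hand (1 : C) e))

/-- The element `xe` of `Ce`. -/
def toCe (x : C) : Hand (1 : C) e := Hand.mk (x * e) (by rw [one_mul, mul_assoc, he.out.eq])

@[simp] lemma toCe_val (x : C) : (toCe e x).val = x * e := rfl

lemma toCe_of_val (x : Hand (1 : C) e) : toCe e x.val = x :=
  Hand.val_injective (Hand.right_absorb x)

lemma toCe_add (x y : C) : toCe e (x + y) = toCe e x + toCe e y :=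
  Hand.val_injective (add_mul x y e)

lemma toCe_mul (x y : C) : toCe e (x * e * y) = op (Hand.compress e e y) • toCe e x := by
  apply Hand.val_injective
  simp only [toCe_val, Hand.val_op_smul, unop_op, Hand.val_compress, mul_assoc]
  rw [← mul_assoc e e, he.out.eq]

lemma alpha_injective_iff
    (hα : ∀ (c : C) (x : Hand (1 : C) e), (α c x).val = c * x.val) :
    Function.Injective α ↔ ∀ a : C, (∀ c, a * c * e = 0) → a = 0 := by
  rw [injective_iff_map_eq_zero]
  refine forall_congr' fun a => imp_congr_left ?_
  constructor
  · intro h c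
    have := hα a (toCe e c)
    rw [h] at this
    rw [mul_assoc]
    exact this.symm
  · intro h
    ext x
    apply Hand.val_injective
    rw [hα, ← toCe_of_val e x, toCe_val, ← mul_assoc, h]
    rfl

lemma alpha_surjective_iff
    (hα : ∀ (c : C) (x : Hand (1 : C) e), (α c x).val = c * x.val)
    (hinj : ∀ a : C, (∀ c, a * c * e = 0) → a = 0) :
    Function.Surjective α ↔
      ∀ φ : LinearMap.ker (qmap e) →ₗ[Cᵐᵒᵖ] C, ∃ ψ : C →ₗ[Cᵐᵒᵖ] C, ∀ x, ψ x.1 = φ x := by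
  constructor
  · intro hs φ
    have hk : ∀ x : C, qmap e (x * e) = 0 := fun x => by
      have := qmap_mul_mul e x 1
      rwa [mul_one] at this
    have hφ : ∀ (x y : C) (hx : qmap e x = 0) (hxy : qmap e (x * y) = 0),
        φ ⟨x * y, hxy⟩ = φ ⟨x, hx⟩ * y := fun x y hx hxy =>
      φ.map_smul (op y) ⟨x, hx⟩
    have hx0 : ∀ x : Hand (1 : C) e, qmap e x.val = 0 := fun x => by
      rw [← Hand.right_absorb x]; exact hk _
    let f : Module.End (Hand e e)ᵐᵒᵖ (Hand (1 : C) e) :=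
      { toFun := fun x => Hand.mk (φ ⟨x.val, hx0 x⟩) (by
          rw [one_mul, ← hφ _ _ (hx0 x) (by rw [Hand.right_absorb]; exact hx0 x)]
          congr 2
          exact Hand.right_absorb x)
        map_add' := fun x y => Hand.val_injective (φ.map_add ⟨x.val, hx0 x⟩ ⟨y.val, hx0 y⟩)
        map_smul' := fun c x => Hand.val_injective
          (φ.map_smul (op c.unop.val) ⟨x.val, hx0 x⟩) }
    obtain ⟨a, ha⟩ := hs f
    refine ⟨{ toFun := fun x => a * x
              map_add' := mul_add a
              map_smul' := fun c x => (mul_assoc a x c.unop).symm }, ?_⟩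
    rintro ⟨x, hx⟩
    change a * x = φ ⟨x, hx⟩
    rw [← sub_eq_zero]
    apply hinj
    intro c
    have h1 := hα a (toCe e (x * c))
    rw [ha] at h1
    have h2 : φ ⟨x * c * e, hk _⟩ = a * (x * c * e) := h1
    have h3 : φ ⟨x * (c * e), by rw [← mul_assoc]; exact hk _⟩ = φ ⟨x, hx⟩ * (c * e) :=
      hφ x (c * e) hx _
    simp only [← mul_assoc] at h2 h3
    rw [sub_mul, sub_mul, ← h3, h2, sub_self]
  · intro h f
    have hex : ∀ x : C, qmap e x = 0 → ∃ y : C, ∀ c, y * c * e = (f (toCe e (x * c))).val := by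
      refine qmap_induction e _ ?_ ?_ ?_ ?_
      · refine ⟨0, fun c => ?_⟩
        have : toCe e (0 * c) = 0 := Hand.val_injective (by simp)
        rw [this, map_zero]; simp
      · rintro x y ⟨x', hx⟩ ⟨y', hy⟩
        refine ⟨x' + y', fun c => ?_⟩
        rw [add_mul, add_mul, hx, hy, add_mul, toCe_add, map_add, Hand.val_add]
      · rintro x ⟨x', hx⟩
        refine ⟨-x', fun c => ?_⟩
        have : toCe e (-x * c) = - toCe e (x * c) := by
          rw [eq_neg_iff_add_eq_zero, ← toCe_add]
          exact Hand.val_injective (by simp)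
        rw [this, map_neg, neg_mul, neg_mul, hx]; rfl
      · intro a b
        refine ⟨(f (toCe e a)).val * b, fun c => ?_⟩
        rw [mul_assoc (a * e), toCe_mul, map_smul, Hand.val_op_smul, unop_op, Hand.val_compress]
        conv_lhs => rw [← Hand.right_absorb (f (toCe e a))]
        simp only [mul_assoc]
    choose! g hg using hex
    have huniq : ∀ y y' : C, (∀ c, y * c * e = y' * c * e) → y = y' := by
      intro y y' hyy
      rw [← sub_eq_zero]
      apply hinj
      intro c
      rw [sub_mul, sub_mul, hyy, sub_self]
    let φ : LinearMap.ker (qmap e) →ₗ[Cᵐᵒᵖ] C :=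
      { toFun := fun x => g x.1
        map_add' := fun x y => by
          apply huniq
          intro c
          rw [hg _ (x + y).2, add_mul, add_mul, hg _ x.2, hg _ y.2, ← Hand.val_add, ← map_add,
            ← toCe_add, ← add_mul]
          rfl
        map_smul' := fun d x => by
          apply huniq
          intro c
          rw [hg _ (d • x).2]
          have : (RingHom.id Cᵐᵒᵖ) d • g x.1 = g x.1 * d.unop := rfl
          rw [this, mul_assoc (g x.1), hg _ x.2, ← mul_assoc]
          rfl }
    obtain ⟨ψ, hψ⟩ := h φ
    refine ⟨ψ 1, ?_⟩
    have hψ1 : ∀ x, ψ x = ψ 1 * x := fun x => by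
      have := ψ.map_smul (op x) 1
      simpa using this
    ext x
    apply Hand.val_injective
    have hx0 : qmap e x.val = 0 := by
      have := qmap_mul_mul e x.val 1
      rwa [mul_one, Hand.right_absorb] at this
    have h1 := hψ ⟨x.val, hx0⟩
    change ψ x.val = g x.val at h1
    have h2 := hg _ hx0 1
    rw [mul_one, mul_one, toCe_of_val, ← h1, hψ1, mul_assoc, Hand.right_absorb] at h2
    rw [hα, h2]

end Alpha

/-- For a Morita context `(C, e)` with `A = eCe`, the canonical ring
homomorphism `α : C → End_A(Ce)` (left multiplication on the right `A`-module `Ce`, where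
`Ce ≅ M ⊕ A`) is injective iff `Hom_C(C̄, C) = 0` iff `grade_C C̄ ≥ 1`, and bijective iff
`Ext^i_C(C̄, C) = 0` for `i = 0, 1` iff `grade_C C̄ ≥ 2`. -/
theorem auslander_context_criterion
    (C : Type) [Ring C] (e : C) [Fact (IsIdempotentElem e)]
    (α : C →+* Module.End (Hand e e)ᵐᵒᵖ (Hand (1 : C) e))
    (hα : ∀ (c : C) (x : Hand (1 : C) e), (α c x).val = c * x.val) :
    (Function.Injective α ↔ Subsingleton (CBar e →ₗ[Cᵐᵒᵖ] C))
    ∧ (Function.Injective α ↔ 1 ≤ rgrade C (CBar e))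
    ∧ (Function.Bijective α ↔
        (Subsingleton (Abelian.Ext (ModuleCat.of Cᵐᵒᵖ (CBar e)) (ModuleCat.of Cᵐᵒᵖ C) 0) ∧
         Subsingleton (Abelian.Ext (ModuleCat.of Cᵐᵒᵖ (CBar e)) (ModuleCat.of Cᵐᵒᵖ C) 1)))
    ∧ (Function.Bijective α ↔ 2 ≤ rgrade C (CBar e)) := by
  have h1 := alpha_injective_iff e α hα
  have h2 := hom_subsingleton_iff e
  have h3 : Function.Bijective α ↔
      (Subsingleton (Abelian.Ext (ModuleCat.of Cᵐᵒᵖ (CBar e)) (ModuleCat.of Cᵐᵒᵖ C) 0) ∧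
       Subsingleton (Abelian.Ext (ModuleCat.of Cᵐᵒᵖ (CBar e)) (ModuleCat.of Cᵐᵒᵖ C) 1)) := by
    rw [ext_zero_subsingleton_iff, h2,
      ext_one_subsingleton_iff C (CBar e) C (qmap e) (cbarMk_surjective e),
      Function.Bijective, h1]
    exact and_congr_right fun h => alpha_surjective_iff e α hα h
  refine ⟨h1.trans h2.symm, ?_, h3, ?_⟩
  · rw [one_le_rgrade_iff, ext_zero_subsingleton_iff, h1, h2]
  · rw [two_le_rgrade_iff, h3]

end MoritaHochschild
end
end

section
/- Let A be a ring and M an A-generator (a right A-module such that A is a direct summand of a finite direct sum of copies of M). Let g be the grade of the stable endomorphism ring End̲_A(M) as a right module over End_A(M). Then g = 1 + inf{ 1 ≤ i ≤ ∞ : Ext^i_A(M,M) ≠ 0 } ≥ 2; equivalently, g ≥ 2 always, and for 1 ≤ i ≤ g−2 one has Ext^i_A(M,M) = 0 while Ext^{g−1}_A(M,M) ≠ 0 when g is finite. Moreover, if g is finite then Ext^g_{End_A(M)}(End̲_A(M), End_A(M)) ≅ Ext^{g−1}_A(M,M). -/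
open CategoryTheory MulOpposite

attribute [local instance] HasDerivedCategory.standard
attribute [local instance] CategoryTheory.hasExt_of_hasDerivedCategory

set_option maxHeartbeats 1000000
set_option synthInstance.maxHeartbeats 400000
set_option linter.unusedSectionVars false
set_option linter.unusedVariables false

noncomputable section
namespace MoritaHochschild

/-! ### Generators and finite projectives -/

/-- A right `R`-module `X` is a generator if `R` is a direct summand of a finite
direct sum of copies of `X`. -/
def IsRGenerator (R : Type) [Ring R] (X : Type) [AddCommGroup X] [Module Rᵐᵒᵖ X] : Prop :=
  ∃ (k : ℕ) (p : (Fin k → X) →ₗ[Rᵐᵒᵖ] R) (s : R →ₗ[Rᵐᵒᵖ] (Fin k → X)),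
    p.comp s = LinearMap.id

/-- A left `R`-module `X` is a generator if `R` is a direct summand of a finite
direct sum of copies of `X`. -/
def IsLGenerator (R : Type) [Ring R] (X : Type) [AddCommGroup X] [Module R X] : Prop :=
  ∃ (k : ℕ) (p : (Fin k → X) →ₗ[R] R) (s : R →ₗ[R] (Fin k → X)),
    p.comp s = LinearMap.id


/-- The two-sided ideal of `End_A(M)` of endomorphisms factoring through a finitely
generated projective (equivalently finite free) module: the ideal generated by the
rank-one endomorphisms `m' ↦ m · λ(m')`, i.e. the image of the norm map
`M ⊗_A Hom_A(M, A) → End_A(M)`. -/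
def projectivelyTrivialIdeal (A : Type) [Ring A] (M : Type) [AddCommGroup M]
    [Module Aᵐᵒᵖ M] : TwoSidedIdeal (Module.End Aᵐᵒᵖ M) :=
  TwoSidedIdeal.span
    {φ : Module.End Aᵐᵒᵖ M | ∃ (lam : M →ₗ[Aᵐᵒᵖ] A) (m : M), ∀ x : M, φ x = (op (lam x)) • m}

/-- The stable endomorphism ring `End̲_A(M)`, the cokernel of the norm map. -/
def StableEnd (A : Type) [Ring A] (M : Type) [AddCommGroup M] [Module Aᵐᵒᵖ M] : Type :=
  (projectivelyTrivialIdeal A M).ringCon.Quotient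

instance (A : Type) [Ring A] (M : Type) [AddCommGroup M] [Module Aᵐᵒᵖ M] :
    Ring (StableEnd A M) :=
  inferInstanceAs (Ring (projectivelyTrivialIdeal A M).ringCon.Quotient)

/-- The quotient map onto the stable endomorphism ring. -/
def stableEndMk (A : Type) [Ring A] (M : Type) [AddCommGroup M] [Module Aᵐᵒᵖ M] :
    Module.End Aᵐᵒᵖ M →+* StableEnd A M :=
  RingCon.mk' (projectivelyTrivialIdeal A M).ringCon

/-- The stable endomorphism ring as a right module over the endomorphism ring. -/
instance (A : Type) [Ring A] (M : Type) [AddCommGroup M] [Module Aᵐᵒᵖ M] :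
    Module (Module.End Aᵐᵒᵖ M)ᵐᵒᵖ (StableEnd A M) :=
  Module.compHom (StableEnd A M) (RingHom.op (stableEndMk A M))

/-! ### General homological algebra -/

section General

universe w v u

variable {C : Type u} [Category.{v} C] [Abelian C] [HasExt.{w} C]

open Abelian

/-- Dimension shifting in the second variable. -/
lemma dimShift (X : C) {S : ShortComplex C} (hS : S.ShortExact) (n : ℕ)
    (h0 : Subsingleton (Ext X S.X₂ n)) (h1 : Subsingleton (Ext X S.X₂ (n + 1))) :
    Nonempty (Ext X S.X₃ n ≃+ Ext X S.X₁ (n + 1)) := by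
  refine ⟨AddEquiv.ofBijective (hS.extClass.postcomp X rfl) ⟨?_, ?_⟩⟩
  · rw [injective_iff_map_eq_zero]
    intro x hx
    obtain ⟨y, rfl⟩ := Ext.covariant_sequence_exact₃ X hS x rfl hx
    rw [Subsingleton.elim y 0, Ext.zero_comp]
  · intro x
    obtain ⟨y, hy⟩ := Ext.covariant_sequence_exact₁ X hS x (Subsingleton.elim _ _) rfl
    exact ⟨y, hy⟩

/-- Transport of `Ext` along an isomorphism of the second argument. -/
def extIso (X : C) {Y Y' : C} (e : Y ≅ Y') (n : ℕ) : Ext X Y n ≃+ Ext X Y' n where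
  toFun x := x.comp (Ext.mk₀ e.hom) (add_zero n)
  invFun x := x.comp (Ext.mk₀ e.inv) (add_zero n)
  left_inv x := by simp
  right_inv x := by simp
  map_add' x y := by simp

end General

/-! ### The functor `Hom_A(M, -)` to right `End_A(M)`-modules -/

section HomFunctor

variable (A : Type) [Ring A] (M : Type) [AddCommGroup M] [Module Aᵐᵒᵖ M]

/-- `Hom_A(M, Z)`, to be viewed as a right `End_A(M)`-module. -/
def HomM (Z : Type) [AddCommGroup Z] [Module Aᵐᵒᵖ Z] : Type := M →ₗ[Aᵐᵒᵖ] Z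

variable (Z : Type) [AddCommGroup Z] [Module Aᵐᵒᵖ Z]

instance : AddCommGroup (HomM A M Z) := inferInstanceAs (AddCommGroup (M →ₗ[Aᵐᵒᵖ] Z))

instance : Module (Module.End Aᵐᵒᵖ M)ᵐᵒᵖ (HomM A M Z) where
  smul f q := LinearMap.comp (show M →ₗ[Aᵐᵒᵖ] Z from q) f.unop
  one_smul q := LinearMap.comp_id _
  mul_smul f g q := rfl
  smul_zero f := LinearMap.zero_comp _
  smul_add f q r := LinearMap.add_comp _ _ _
  add_smul f g q := LinearMap.comp_add _ _ _
  zero_smul q := LinearMap.comp_zero _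

variable {A M Z}

/-- View an element of `HomM` as a linear map. -/
def HomM.lin : HomM A M Z →+ (M →ₗ[Aᵐᵒᵖ] Z) := AddMonoidHom.id _

/-- View a linear map as an element of `HomM`. -/
def HomM.mk : (M →ₗ[Aᵐᵒᵖ] Z) →+ HomM A M Z := AddMonoidHom.id _

@[simp] lemma HomM.lin_mk (q : M →ₗ[Aᵐᵒᵖ] Z) : HomM.lin (HomM.mk q) = q := rfl
@[simp] lemma HomM.mk_lin (q : HomM A M Z) : HomM.mk (HomM.lin q) = q := rfl
@[simp] lemma HomM.lin_smul (f : (Module.End Aᵐᵒᵖ M)ᵐᵒᵖ) (q : HomM A M Z) (x : M) :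
    HomM.lin (f • q) x = HomM.lin q (f.unop x) := rfl
@[ext] lemma HomM.ext {q r : HomM A M Z} (h : ∀ x, HomM.lin q x = HomM.lin r x) : q = r :=
  LinearMap.ext h

variable {Z' : Type} [AddCommGroup Z'] [Module Aᵐᵒᵖ Z']

variable (M) in
/-- Functoriality of `HomM`. -/
def HomM.map (u : Z →ₗ[Aᵐᵒᵖ] Z') :
    HomM A M Z →ₗ[(Module.End Aᵐᵒᵖ M)ᵐᵒᵖ] HomM A M Z' where
  toFun q := HomM.mk (u.comp (HomM.lin q))
  map_add' q r := LinearMap.comp_add _ _ _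
  map_smul' f q := rfl

@[simp] lemma HomM.lin_map (u : Z →ₗ[Aᵐᵒᵖ] Z') (q : HomM A M Z) (x : M) :
    HomM.lin (HomM.map M u q) x = u (HomM.lin q x) := rfl

variable (A M) in
/-- `End_A(M)` is `Hom_A(M, M)`. -/
def endEquiv : HomM A M M ≃ₗ[(Module.End Aᵐᵒᵖ M)ᵐᵒᵖ] Module.End Aᵐᵒᵖ M where
  toFun q := HomM.lin q
  invFun q := HomM.mk q
  map_add' q r := rfl
  map_smul' f q := rfl
  left_inv q := rfl
  right_inv q := rfl

/-- A usable form of the generator property. -/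
lemma gen_exists (hgen : IsRGenerator A M) :
    ∃ (k : ℕ) (p : Fin k → (M →ₗ[Aᵐᵒᵖ] A)) (s : Fin k → M), ∑ j, p j (s j) = 1 := by
  obtain ⟨k, p, s, h⟩ := hgen
  refine ⟨k, fun j => p.comp (LinearMap.single Aᵐᵒᵖ (fun _ => M) j), s 1, ?_⟩
  have h1 := LinearMap.congr_fun h 1
  simp only [LinearMap.comp_apply, LinearMap.id_apply] at h1 ⊢
  rw [← map_sum]
  refine Eq.trans (congrArg p ?_) h1
  exact LinearMap.sum_single_apply (φ := fun _ : Fin k => M) (s 1)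

/-- The rank one map `x ↦ n · lam(x)`. -/
def rankOne {N : Type} [AddCommGroup N] [Module Aᵐᵒᵖ N] (lam : M →ₗ[Aᵐᵒᵖ] A) (n : N) :
    M →ₗ[Aᵐᵒᵖ] N where
  toFun x := op (lam x) • n
  map_add' x y := by simp [add_smul]
  map_smul' a x := by
    simp only [map_smul, RingHom.id_apply, ← mul_smul]
    rfl

@[simp] lemma rankOne_apply {N : Type} [AddCommGroup N] [Module Aᵐᵒᵖ N]
    (lam : M →ₗ[Aᵐᵒᵖ] A) (n : N) (x : M) : rankOne lam n x = op (lam x) • n := rfl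

lemma rankOne_sum {N : Type} [AddCommGroup N] [Module Aᵐᵒᵖ N] {k : ℕ}
    {p : Fin k → (M →ₗ[Aᵐᵒᵖ] A)} {s : Fin k → M} (h : ∑ j, p j (s j) = 1) (n : N) :
    ∑ j, rankOne (p j) n (s j) = n := by
  simp only [rankOne_apply, ← Finset.sum_smul]
  rw [← Finset.op_sum, h, MulOpposite.op_one, one_smul]

lemma rankOne_mem (lam : M →ₗ[Aᵐᵒᵖ] A) (m : M) :
    (rankOne lam m : Module.End Aᵐᵒᵖ M) ∈ projectivelyTrivialIdeal A M :=
  TwoSidedIdeal.subset_span ⟨lam, m, fun _ => rfl⟩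

/-- `Hom_A(M, J)` is injective if `J` is. -/
lemma homM_injective (hgen : IsRGenerator A M) (J : Type) [AddCommGroup J] [Module Aᵐᵒᵖ J]
    [Module.Injective Aᵐᵒᵖ J] : Module.Injective (Module.End Aᵐᵒᵖ M)ᵐᵒᵖ (HomM A M J) := by
  obtain ⟨k, p, s, hps⟩ := gen_exists hgen
  apply Module.Baer.injective
  intro L φ
  let F : (L →₀ M) →ₗ[Aᵐᵒᵖ] M :=
    Finsupp.lsum ℕ (fun l : L => (l.1.unop : M →ₗ[Aᵐᵒᵖ] M))
  let G : (L →₀ M) →ₗ[Aᵐᵒᵖ] J :=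
    Finsupp.lsum ℕ (fun l : L => HomM.lin (φ l))
  have key : LinearMap.ker F ≤ LinearMap.ker G := by
    intro x hx
    have hx0 : ∑ l ∈ x.support, l.1.unop (x l) = 0 := hx
    change ∑ l ∈ x.support, HomM.lin (φ l) (x l) = 0
    have h1 : ∀ j, ∑ l ∈ x.support, (op (rankOne (p j) (x l) : Module.End Aᵐᵒᵖ M)) • l
        = (0 : L) := by
      intro j
      ext1
      rw [Submodule.coe_sum]
      apply MulOpposite.unop_injective
      ext y
      simp only [Submodule.coe_smul, smul_eq_mul, Finset.unop_sum, MulOpposite.unop_mul,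
        MulOpposite.unop_op, ZeroMemClass.coe_zero, MulOpposite.unop_zero, LinearMap.sum_apply, Module.End.mul_apply, LinearMap.zero_apply, rankOne_apply,
        map_smul]
      rw [← Finset.smul_sum, hx0, smul_zero]
    have h2 : ∀ l : L, HomM.lin (φ l) (x l)
        = ∑ j, HomM.lin (φ ((op (rankOne (p j) (x l) : Module.End Aᵐᵒᵖ M)) • l)) (s j) := by
      intro l
      conv_lhs => rw [← rankOne_sum hps (x l)]
      simp only [map_smul, HomM.lin_smul, unop_op, map_sum]
    rw [Finset.sum_congr rfl (fun l _ => h2 l), Finset.sum_comm]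
    apply Finset.sum_eq_zero
    intro j _
    rw [← LinearMap.sum_apply, ← map_sum, ← map_sum, h1 j]
    simp
  obtain ⟨ψ, hψ⟩ := Module.Injective.out (R := Aᵐᵒᵖ) (Q := J)
    ((LinearMap.ker F).liftQ F le_rfl)
    (by rw [← LinearMap.ker_eq_bot]; exact Submodule.ker_liftQ_eq_bot _ _ _ le_rfl)
    ((LinearMap.ker F).liftQ G key)
  refine ⟨LinearMap.toSpanSingleton _ _ (HomM.mk ψ), ?_⟩
  intro x hx
  ext m
  have := hψ (Submodule.Quotient.mk (Finsupp.single ⟨x, hx⟩ m))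
  simpa [F, G] using this

/-- Elements of `Hom_A(M, Z)` killed by the ideal vanish. -/
lemma homM_eq_zero (hgen : IsRGenerator A M) (q : HomM A M Z)
    (h : ∀ f ∈ projectivelyTrivialIdeal A M, (op f) • q = 0) : q = 0 := by
  obtain ⟨k, p, s, hps⟩ := gen_exists hgen
  ext m
  rw [← rankOne_sum hps m, map_sum]
  simp only [map_zero, LinearMap.zero_apply]
  apply Finset.sum_eq_zero
  intro j _
  have := h _ (rankOne_mem (p j) m)
  have h2 := congrArg (fun r => HomM.lin r (s j)) this
  simpa using h2

/-- For surjective `v`, the cokernel of `Hom_A(M, v)` is killed by the ideal. -/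
lemma smul_mem_range (v : Z →ₗ[Aᵐᵒᵖ] Z') (hv : Function.Surjective v)
    (f : Module.End Aᵐᵒᵖ M) (hf : f ∈ projectivelyTrivialIdeal A M) (q : HomM A M Z') :
    (op f) • q ∈ LinearMap.range (HomM.map M v) := by
  induction hf using TwoSidedIdeal.span_induction generalizing q with
  | mem f hf =>
    obtain ⟨lam, m, h⟩ := hf
    obtain ⟨z, hz⟩ := hv (HomM.lin q m)
    refine ⟨HomM.mk (rankOne lam z), ?_⟩
    ext x
    simp [h, hz]
  | zero => simp
  | add x y hx hy h1 h2 => rw [MulOpposite.op_add, add_smul]; exact add_mem (h1 q) (h2 q)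
  | neg x hx h1 => rw [MulOpposite.op_neg, neg_smul]; exact neg_mem (h1 q)
  | left_absorb a x hx h1 => rw [MulOpposite.op_mul, mul_smul]; exact h1 _
  | right_absorb b x hx h1 =>
    rw [MulOpposite.op_mul, mul_smul]; exact Submodule.smul_mem _ _ (h1 q)

end HomFunctor

/-! ### Ext computations -/

section ExtComputations

open Abelian

variable {A : Type} [Ring A] {M : Type} [AddCommGroup M] [Module Aᵐᵒᵖ M]

lemma stable_smul (f : (Module.End Aᵐᵒᵖ M)ᵐᵒᵖ) (x : StableEnd A M) :
    f • x = x * stableEndMk A M f.unop := rfl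

lemma stable_smul_one (f : Module.End Aᵐᵒᵖ M) :
    (op f) • (1 : StableEnd A M) = stableEndMk A M f := by
  rw [stable_smul, one_mul, MulOpposite.unop_op]

lemma stable_mk_eq_zero (f : Module.End Aᵐᵒᵖ M) :
    stableEndMk A M f = 0 ↔ f ∈ projectivelyTrivialIdeal A M :=
  RingCon.eq _

lemma stable_mk_surjective : Function.Surjective (stableEndMk A M) :=
  RingCon.mk'_surjective _

/-- A homomorphism out of the stable endomorphism ring is evaluated at `1`. -/
lemma stable_hom_ext {N : Type} [AddCommGroup N] [Module (Module.End Aᵐᵒᵖ M)ᵐᵒᵖ N]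
    (g h : StableEnd A M →ₗ[(Module.End Aᵐᵒᵖ M)ᵐᵒᵖ] N) (e : g 1 = h 1) : g = h := by
  ext x
  obtain ⟨f, rfl⟩ := stable_mk_surjective x
  rw [← stable_smul_one, map_smul, map_smul, e]

lemma stable_hom_one {N : Type} [AddCommGroup N] [Module (Module.End Aᵐᵒᵖ M)ᵐᵒᵖ N]
    (g : StableEnd A M →ₗ[(Module.End Aᵐᵒᵖ M)ᵐᵒᵖ] N) (f : Module.End Aᵐᵒᵖ M)
    (hf : f ∈ projectivelyTrivialIdeal A M) : (op f) • g 1 = 0 := by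
  rw [← map_smul, stable_smul_one, (stable_mk_eq_zero f).2 hf, map_zero]

/-- `Hom(E/I, N) = N` if `N` is killed by `I`. -/
lemma stable_hom_equiv {N : Type} [AddCommGroup N] [Module (Module.End Aᵐᵒᵖ M)ᵐᵒᵖ N]
    (hN : ∀ f ∈ projectivelyTrivialIdeal A M, ∀ n : N, (op f) • n = 0) :
    Nonempty ((StableEnd A M →ₗ[(Module.End Aᵐᵒᵖ M)ᵐᵒᵖ] N) ≃+ N) := by
  refine ⟨AddEquiv.ofBijective
    (AddMonoidHom.mk' (fun g => g 1) (fun g h => rfl)) ⟨fun g h e => stable_hom_ext g h e, ?_⟩⟩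
  intro n
  have hwd : ∀ a b : Module.End Aᵐᵒᵖ M, stableEndMk A M a = stableEndMk A M b →
      (op a) • n = (op b) • n := by
    intro a b hab
    have h1 : a - b ∈ projectivelyTrivialIdeal A M := by
      rw [← stable_mk_eq_zero, map_sub, hab, sub_self]
    have h2 := hN _ h1 n
    rwa [MulOpposite.op_sub, sub_smul, sub_eq_zero] at h2
  choose r hr using stable_mk_surjective (A := A) (M := M)
  refine ⟨{ toFun := fun x => (op (r x)) • n, map_add' := ?_, map_smul' := ?_ }, ?_⟩
  · intro x y
    rw [← add_smul, ← MulOpposite.op_add]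
    apply hwd
    rw [map_add, hr, hr, hr]
  · intro f x
    rw [RingHom.id_apply, ← mul_smul]
    have : f * op (r x) = op (r x * f.unop) := rfl
    rw [this]
    apply hwd
    rw [map_mul, hr, hr, stable_smul]
  · change (op (r 1)) • n = n
    have := hwd (r 1) 1 (by rw [hr, map_one])
    rwa [MulOpposite.op_one, one_smul] at this

/-- The stable endomorphism ring as an object. -/
abbrev stab (A : Type) [Ring A] (M : Type) [AddCommGroup M] [Module Aᵐᵒᵖ M] :
    ModuleCat.{0} (Module.End Aᵐᵒᵖ M)ᵐᵒᵖ :=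
  ModuleCat.of (Module.End Aᵐᵒᵖ M)ᵐᵒᵖ (StableEnd A M)

/-- `Hom_A(M, Z)` as an object. -/
abbrev homObj (M : Type) [AddCommGroup M] [Module Aᵐᵒᵖ M] (Z : ModuleCat.{0} Aᵐᵒᵖ) :
    ModuleCat.{0} (Module.End Aᵐᵒᵖ M)ᵐᵒᵖ :=
  ModuleCat.of (Module.End Aᵐᵒᵖ M)ᵐᵒᵖ (HomM A M Z)

lemma ext_zero_homObj (hgen : IsRGenerator A M) (Z : ModuleCat.{0} Aᵐᵒᵖ) :
    Subsingleton (Ext (stab A M) (homObj M Z) 0) := by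
  refine (Ext.addEquiv₀ (X := stab A M) (Y := homObj M Z)).toEquiv.subsingleton_congr.2 ?_
  refine (ModuleCat.homEquiv (M := stab A M) (N := homObj M Z)).subsingleton_congr.2 ?_
  refine ⟨fun g h => stable_hom_ext g h ?_⟩
  rw [homM_eq_zero hgen (g 1) (fun f hf => stable_hom_one g f hf),
    homM_eq_zero hgen (h 1) (fun f hf => stable_hom_one h f hf)]

lemma ext_homObj_injective (hgen : IsRGenerator A M) (J : ModuleCat.{0} Aᵐᵒᵖ) [Injective J]
    (n : ℕ) : Subsingleton (Ext (stab A M) (homObj M J) n) := by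
  cases n with
  | zero => exact ext_zero_homObj hgen J
  | succ n =>
    have : Injective (ModuleCat.of Aᵐᵒᵖ J) := ‹Injective J›
    have := Module.injective_module_of_injective_object Aᵐᵒᵖ J
    have := homM_injective hgen J
    have := Module.injective_object_of_injective_module (Module.End Aᵐᵒᵖ M)ᵐᵒᵖ (HomM A M J)
    exact Ext.subsingleton_of_injective _ _ n

variable {S : ShortComplex (ModuleCat.{0} Aᵐᵒᵖ)} (hS : S.ShortExact)

/-- The image of `Hom_A(M, J) → Hom_A(M, Z')`. -/
abbrev imB (M : Type) [AddCommGroup M] [Module Aᵐᵒᵖ M] (S : ShortComplex (ModuleCat.{0} Aᵐᵒᵖ)) :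
    Submodule (Module.End Aᵐᵒᵖ M)ᵐᵒᵖ (HomM A M S.X₃) :=
  LinearMap.range (HomM.map M S.g.hom)

lemma homM_map_injective (hS : S.ShortExact) : Function.Injective (HomM.map M S.f.hom) := by
  intro q r h
  ext x
  apply hS.moduleCat_injective_f
  exact congrArg (fun t => HomM.lin t x) h

lemma homM_map_exact (hS : S.ShortExact) :
    Function.Exact (HomM.map M S.f.hom) (HomM.map M S.g.hom) := by
  have hex : Function.Exact S.f.hom S.g.hom :=
    (ShortComplex.ShortExact.moduleCat_exact_iff_function_exact S).1 hS.exact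
  intro q
  constructor
  · intro hq
    have h1 : ∀ x, ∃ z, S.f.hom z = HomM.lin q x := by
      intro x
      have : S.g.hom (HomM.lin q x) = 0 := congrArg (fun t => HomM.lin t x) hq
      exact (hex _).1 this
    choose z hz using h1
    have hinj : Function.Injective S.f.hom := hS.moduleCat_injective_f
    refine ⟨HomM.mk { toFun := z, map_add' := ?_, map_smul' := ?_ }, ?_⟩
    · intro x y
      apply hinj
      rw [map_add, hz, hz, hz, map_add]
    · intro a x
      apply hinj
      rw [map_smul, hz, hz, RingHom.id_apply, map_smul]
    · ext x
      exact hz x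
  · rintro ⟨r, rfl⟩
    ext x
    exact hex.apply_apply_eq_zero (HomM.lin r x)

/-- `0 → Hom(M, Z) → Hom(M, J) → B → 0`. -/
abbrev seqOne (M : Type) [AddCommGroup M] [Module Aᵐᵒᵖ M] (hS : S.ShortExact) :
    ShortComplex (ModuleCat.{0} (Module.End Aᵐᵒᵖ M)ᵐᵒᵖ) :=
  ModuleCat.shortComplexOfCompEqZero (HomM.map M S.f.hom) (HomM.map M S.g.hom).rangeRestrict
    (by
      ext1 q
      apply Subtype.ext
      exact (homM_map_exact hS).apply_apply_eq_zero q)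

lemma seqOne_shortExact (hS : S.ShortExact) : (seqOne M hS).ShortExact := by
  apply ModuleCat.shortComplex_shortExact
  · intro q
    refine Iff.trans ?_ (homM_map_exact hS q)
    exact Subtype.ext_iff
  · exact homM_map_injective hS
  · exact LinearMap.surjective_rangeRestrict _

/-- `0 → B → Hom(M, Z') → Hom(M, Z')/B → 0`. -/
abbrev seqTwo (M : Type) [AddCommGroup M] [Module Aᵐᵒᵖ M]
    (S : ShortComplex (ModuleCat.{0} Aᵐᵒᵖ)) :
    ShortComplex (ModuleCat.{0} (Module.End Aᵐᵒᵖ M)ᵐᵒᵖ) :=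
  ModuleCat.shortComplexOfCompEqZero (imB M S).subtype (imB M S).mkQ
    (by ext q; simp)

lemma seqTwo_shortExact : (seqTwo M S).ShortExact := by
  apply ModuleCat.shortComplex_shortExact
  · exact LinearMap.exact_subtype_mkQ _
  · exact Subtype.val_injective
  · exact Submodule.mkQ_surjective _

/-- `Ext^1_A(M, Z)` is the cokernel of `Hom(M, J) → Hom(M, Z')`. -/
lemma ext_one_equiv (hS : S.ShortExact) [Injective S.X₂] :
    Nonempty ((HomM A M S.X₃ ⧸ imB M S) ≃+ Ext (ModuleCat.of Aᵐᵒᵖ M) S.X₁ 1) := by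
  let F : HomM A M S.X₃ →+ Ext (ModuleCat.of Aᵐᵒᵖ M) S.X₁ 1 :=
    AddMonoidHom.mk' (fun q => (Ext.mk₀ (ModuleCat.ofHom (HomM.lin q))).comp hS.extClass (zero_add 1))
      (by
        intro q r
        rw [map_add, ModuleCat.ofHom_add, Ext.mk₀_add, Ext.add_comp])
  have hker : F.ker = (imB M S).toAddSubgroup := by
    ext q
    constructor
    · intro hq
      obtain ⟨x₂, h⟩ := Ext.covariant_sequence_exact₃ _ hS _ (zero_add 1) hq
      obtain ⟨y, rfl⟩ := Ext.addEquiv₀.symm.surjective x₂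
      rw [Ext.addEquiv₀_symm_apply, Ext.mk₀_comp_mk₀] at h
      have h2 := (Ext.mk₀_bijective _ _).1 h
      refine ⟨HomM.mk y.hom, ?_⟩
      ext x
      exact congrArg (fun t => t.hom x) h2
    · rintro ⟨r, rfl⟩
      change (Ext.mk₀ (ModuleCat.ofHom (HomM.lin r) ≫ S.g)).comp hS.extClass (zero_add 1) = 0
      rw [← Ext.mk₀_comp_mk₀, Ext.comp_assoc_of_second_deg_zero, hS.comp_extClass, Ext.comp_zero]
  have hsurj : Function.Surjective F := by
    intro x
    obtain ⟨x₃, h⟩ := Ext.covariant_sequence_exact₁ _ hS x (Ext.eq_zero_of_injective _) (zero_add 1)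
    obtain ⟨y, rfl⟩ := Ext.addEquiv₀.symm.surjective x₃
    exact ⟨HomM.mk y.hom, h⟩
  exact ⟨(QuotientAddGroup.quotientAddEquivOfEq hker.symm).trans
    (QuotientAddGroup.quotientKerEquivOfSurjective F hsurj)⟩

/-- Embedding into an injective. -/
lemma exists_seq (Z : ModuleCat.{0} Aᵐᵒᵖ) :
    ∃ (S : ShortComplex (ModuleCat.{0} Aᵐᵒᵖ)), S.ShortExact ∧ Injective S.X₂ ∧ S.X₁ = Z := by
  refine ⟨ShortComplex.mk (Injective.ι Z) (Limits.cokernel.π (Injective.ι Z)) (by simp),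
    ?_, ?_, rfl⟩
  · exact { exact := ShortComplex.exact_cokernel _ }
  · exact Injective.injective_under Z

lemma ext_one_homObj (hgen : IsRGenerator A M) (hS : S.ShortExact) [Injective S.X₂] :
    Subsingleton (Ext (stab A M) (homObj M S.X₁) 1) := by
  obtain ⟨e⟩ := dimShift (stab A M) (seqOne_shortExact (M := M) hS) 0
    (ext_homObj_injective hgen S.X₂ 0) (ext_homObj_injective hgen S.X₂ 1)
  refine e.symm.toEquiv.subsingleton_congr.2 ?_
  have : Mono (seqTwo M S).f := (seqTwo_shortExact (M := M) (S := S)).mono_f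
  have := ext_zero_homObj hgen S.X₃
  exact (Ext.postcomp_mk₀_injective_of_mono (stab A M) (seqTwo M S).f).subsingleton

/-- The base case. -/
lemma ext_two_homObj (hgen : IsRGenerator A M) (Z : ModuleCat.{0} Aᵐᵒᵖ) :
    Nonempty (Ext (stab A M) (homObj M Z) 2 ≃+ Ext (ModuleCat.of Aᵐᵒᵖ M) Z 1) := by
  obtain ⟨S, hS, hJ, rfl⟩ := exists_seq Z
  obtain ⟨S', hS', hJ', h'⟩ := exists_seq S.X₃
  obtain ⟨e⟩ := dimShift (stab A M) (seqOne_shortExact (M := M) hS) 1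
    (ext_homObj_injective hgen S.X₂ 1) (ext_homObj_injective hgen S.X₂ 2)
  obtain ⟨e'⟩ := dimShift (stab A M) (seqTwo_shortExact (M := M) (S := S)) 0
    (ext_zero_homObj hgen S.X₃) (by
      have := ext_one_homObj hgen hS'
      rw [h'] at this
      exact this)
  obtain ⟨c⟩ := ext_one_equiv (M := M) hS
  obtain ⟨d⟩ := stable_hom_equiv (A := A) (M := M) (N := HomM A M S.X₃ ⧸ imB M S) (by
    intro f hf n
    obtain ⟨q, rfl⟩ := Submodule.mkQ_surjective _ n
    rw [← map_smul, Submodule.mkQ_apply, Submodule.Quotient.mk_eq_zero]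
    exact smul_mem_range S.g.hom hS.moduleCat_surjective_g f hf q)
  exact ⟨e.symm.trans <| e'.symm.trans <| Ext.addEquiv₀.trans <|
    ModuleCat.homAddEquiv.trans <| d.trans c⟩

/-- The inductive statement. -/
lemma main_induction (hgen : IsRGenerator A M) (n : ℕ) : ∀ (Z : ModuleCat.{0} Aᵐᵒᵖ)
    (_ : ∀ j, 1 ≤ j → j ≤ n → Subsingleton (Ext (ModuleCat.of Aᵐᵒᵖ M) Z j)),
    (∀ i, i ≤ n + 1 → Subsingleton (Ext (stab A M) (homObj M Z) i)) ∧
    Nonempty (Ext (stab A M) (homObj M Z) (n + 2) ≃+ Ext (ModuleCat.of Aᵐᵒᵖ M) Z (n + 1)) := by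
  induction n with
  | zero =>
    intro Z _
    refine ⟨?_, ext_two_homObj hgen Z⟩
    intro i hi
    obtain rfl | rfl : i = 0 ∨ i = 1 := by omega
    · exact ext_zero_homObj hgen Z
    · obtain ⟨S, hS, hJ, rfl⟩ := exists_seq Z
      exact ext_one_homObj hgen hS
  | succ n ih =>
    intro Z hZ
    obtain ⟨S, hS, hJ, rfl⟩ := exists_seq Z
    have shiftA : ∀ j, 1 ≤ j →
        Nonempty (Ext (ModuleCat.of Aᵐᵒᵖ M) S.X₃ j ≃+ Ext (ModuleCat.of Aᵐᵒᵖ M) S.X₁ (j + 1)) := by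
      intro j hj
      obtain ⟨j, rfl⟩ := Nat.exists_eq_add_of_le' hj
      exact dimShift _ hS (j + 1) (Ext.subsingleton_of_injective _ _ _)
        (Ext.subsingleton_of_injective _ _ _)
    obtain ⟨c⟩ := ext_one_equiv (M := M) hS
    have hsub : Subsingleton (HomM A M S.X₃ ⧸ imB M S) :=
      c.toEquiv.subsingleton_congr.2 (hZ 1 le_rfl (by omega))
    have htop : imB M S = ⊤ := Submodule.Quotient.subsingleton_iff.1 hsub
    have hH : (ModuleCat.shortComplexOfCompEqZero (HomM.map M S.f.hom) (HomM.map M S.g.hom)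
        (homM_map_exact hS).linearMap_comp_eq_zero).ShortExact :=
      ModuleCat.shortComplex_shortExact _ (homM_map_exact hS) (homM_map_injective hS)
        (LinearMap.range_eq_top.1 htop)
    have shiftE : ∀ i, Nonempty (Ext (stab A M) (homObj M S.X₃) i ≃+
        Ext (stab A M) (homObj M S.X₁) (i + 1)) := fun i =>
      dimShift (stab A M) hH i (ext_homObj_injective hgen S.X₂ i)
        (ext_homObj_injective hgen S.X₂ (i + 1))
    obtain ⟨h1, ⟨h2⟩⟩ := ih S.X₃ (by
      intro j hj hjn
      obtain ⟨e⟩ := shiftA j hj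
      exact e.toEquiv.subsingleton_congr.2 (hZ (j + 1) (by omega) (by omega)))
    refine ⟨?_, ?_⟩
    · intro i hi
      cases i with
      | zero => exact ext_zero_homObj hgen S.X₁
      | succ i =>
        obtain ⟨e⟩ := shiftE i
        exact e.toEquiv.subsingleton_congr.1 (h1 i (by omega))
    · obtain ⟨e⟩ := shiftE (n + 2)
      obtain ⟨e'⟩ := shiftA (n + 1) (by omega)
      exact ⟨e.symm.trans (h2.trans e')⟩

end ExtComputations

/-- Let `M` be an `A`-generator and let `g` be the grade of the stable
endomorphism ring `End̲_A(M)` over `End_A(M)`. Then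
`g = 1 + inf{ 1 ≤ i ≤ ∞ | Ext^i_A(M, M) ≠ 0 } ≥ 2`, and if `g` is finite then
`Ext^g_{End_A(M)}(End̲_A(M), End_A(M)) ≅ Ext^{g-1}_A(M, M)`. -/
theorem grade_of_stable_endomorphism_ring
    (A : Type) [Ring A] (M : Type) [AddCommGroup M] [Module Aᵐᵒᵖ M]
    (hgen : IsRGenerator A M) :
    (2 ≤ rgrade (Module.End Aᵐᵒᵖ M) (StableEnd A M))
    ∧ rgrade (Module.End Aᵐᵒᵖ M) (StableEnd A M)
        = 1 + sInf {i : ℕ∞ | ∃ n : ℕ, i = n ∧ 1 ≤ n ∧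
            ¬ Subsingleton (Abelian.Ext (ModuleCat.of Aᵐᵒᵖ M) (ModuleCat.of Aᵐᵒᵖ M) n)}
    ∧ (∀ g : ℕ, rgrade (Module.End Aᵐᵒᵖ M) (StableEnd A M) = (g : ℕ∞) →
        Nonempty
          (Abelian.Ext (ModuleCat.of (Module.End Aᵐᵒᵖ M)ᵐᵒᵖ (StableEnd A M))
              (ModuleCat.of (Module.End Aᵐᵒᵖ M)ᵐᵒᵖ (Module.End Aᵐᵒᵖ M)) g ≃+
           Abelian.Ext (ModuleCat.of Aᵐᵒᵖ M) (ModuleCat.of Aᵐᵒᵖ M) (g - 1))) := by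
  classical
  -- the inductive statement for `Z = M`, with `Hom_A(M, M)` identified with `End_A(M)`
  have main : ∀ n : ℕ, (∀ j, 1 ≤ j → j ≤ n →
      Subsingleton (Abelian.Ext (ModuleCat.of Aᵐᵒᵖ M) (ModuleCat.of Aᵐᵒᵖ M) j)) →
      (∀ i, i ≤ n + 1 → Subsingleton
        (Abelian.Ext (ModuleCat.of (Module.End Aᵐᵒᵖ M)ᵐᵒᵖ (StableEnd A M))
          (ModuleCat.of (Module.End Aᵐᵒᵖ M)ᵐᵒᵖ (Module.End Aᵐᵒᵖ M)) i)) ∧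
      Nonempty (Abelian.Ext (ModuleCat.of (Module.End Aᵐᵒᵖ M)ᵐᵒᵖ (StableEnd A M))
          (ModuleCat.of (Module.End Aᵐᵒᵖ M)ᵐᵒᵖ (Module.End Aᵐᵒᵖ M)) (n + 2) ≃+
        Abelian.Ext (ModuleCat.of Aᵐᵒᵖ M) (ModuleCat.of Aᵐᵒᵖ M) (n + 1)) := by
    intro n hn
    obtain ⟨h1, ⟨h2⟩⟩ := main_induction hgen n (ModuleCat.of Aᵐᵒᵖ M) hn
    let e : ∀ i, Abelian.Ext (stab A M) (homObj M (ModuleCat.of Aᵐᵒᵖ M)) i ≃+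
        Abelian.Ext (ModuleCat.of (Module.End Aᵐᵒᵖ M)ᵐᵒᵖ (StableEnd A M))
          (ModuleCat.of (Module.End Aᵐᵒᵖ M)ᵐᵒᵖ (Module.End Aᵐᵒᵖ M)) i :=
      fun i => extIso _ (endEquiv A M).toModuleIso i
    exact ⟨fun i hi => (e i).toEquiv.subsingleton_congr.1 (h1 i hi), ⟨(e (n + 2)).symm.trans h2⟩⟩
  by_cases hall : ∃ n : ℕ, 1 ≤ n ∧
      ¬ Subsingleton (Abelian.Ext (ModuleCat.of Aᵐᵒᵖ M) (ModuleCat.of Aᵐᵒᵖ M) n)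
  · obtain ⟨hm1, hm2⟩ := Nat.find_spec hall
    have hmin := fun j => @Nat.find_min _ _ hall j
    generalize Nat.find hall = m at hm1 hm2 hmin
    obtain ⟨m, rfl⟩ := Nat.exists_eq_add_of_le' hm1
    obtain ⟨h1, ⟨e⟩⟩ := main m (fun j hj hjm => by
      by_contra hc
      exact hmin j (by omega) ⟨hj, hc⟩)
    have hg : rgrade (Module.End Aᵐᵒᵖ M) (StableEnd A M) = ((m + 2 : ℕ) : ℕ∞) := by
      apply le_antisymm
      · exact sInf_le ⟨m + 2, rfl, fun hc => hm2 (e.toEquiv.subsingleton_congr.1 hc)⟩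
      · apply le_sInf
        rintro i ⟨n, rfl, hn⟩
        rw [Nat.cast_le]
        by_contra hc
        exact hn (h1 n (by omega))
    have hs : sInf {i : ℕ∞ | ∃ n : ℕ, i = n ∧ 1 ≤ n ∧
        ¬ Subsingleton (Abelian.Ext (ModuleCat.of Aᵐᵒᵖ M) (ModuleCat.of Aᵐᵒᵖ M) n)}
        = ((m + 1 : ℕ) : ℕ∞) := by
      apply le_antisymm
      · exact sInf_le ⟨m + 1, rfl, hm1, hm2⟩
      · apply le_sInf
        rintro i ⟨n, rfl, hn1, hn⟩
        rw [Nat.cast_le]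
        by_contra hc
        exact hmin n (by omega) ⟨hn1, hn⟩
    refine ⟨?_, ?_, ?_⟩
    · rw [hg]
      exact_mod_cast (by omega : 2 ≤ m + 2)
    · rw [hg, hs]
      norm_cast
      omega
    · intro g hgg
      rw [hg, Nat.cast_inj] at hgg
      subst hgg
      exact ⟨e⟩
  · have hsub : ∀ n : ℕ, 1 ≤ n →
        Subsingleton (Abelian.Ext (ModuleCat.of Aᵐᵒᵖ M) (ModuleCat.of Aᵐᵒᵖ M) n) := by
      intro n hn
      by_contra hc
      exact hall ⟨n, hn, hc⟩
    have hg : rgrade (Module.End Aᵐᵒᵖ M) (StableEnd A M) = ⊤ := by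
      rw [rgrade, sInf_eq_top]
      rintro i ⟨n, rfl, hn⟩
      exact absurd ((main n (fun j hj _ => hsub j hj)).1 n (by omega)) hn
    have hs : sInf {i : ℕ∞ | ∃ n : ℕ, i = n ∧ 1 ≤ n ∧
        ¬ Subsingleton (Abelian.Ext (ModuleCat.of Aᵐᵒᵖ M) (ModuleCat.of Aᵐᵒᵖ M) n)} = ⊤ := by
      rw [sInf_eq_top]
      rintro i ⟨n, rfl, hn1, hn⟩
      exact absurd (hsub n hn1) hn
    refine ⟨?_, ?_, ?_⟩
    · rw [hg]; exact le_top
    · rw [hg, hs]; rfl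
    · intro g hgg
      rw [hg] at hgg
      exact absurd hgg.symm (ENat.natCast_ne_top g)

end MoritaHochschild
end
end

section
/- Let A be a ring and M an A-generator such that End_A(M) is a right noetherian ring of finite global dimension d. If Ext^i_A(M,M) = 0 for i = 1, …, d−1, then M is a finite projective A-module and A has global dimension equal to d. -/
open CategoryTheory MulOpposite

attribute [local instance] HasDerivedCategory.standard
attribute [local instance] CategoryTheory.hasExt_of_hasDerivedCategory

set_option maxHeartbeats 1000000
set_option synthInstance.maxHeartbeats 400000
set_option linter.unusedSectionVars false
set_option linter.unusedVariables false

noncomputable section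
namespace MoritaHochschild

/-- The (right) global dimension of `R` is at most `d`:
all Ext-groups of right `R`-modules vanish in degrees above `d`. -/
def globalDimLE (R : Type) [Ring R] (d : ℕ) : Prop :=
  ∀ (X Y : ModuleCat.{0} Rᵐᵒᵖ) (i : ℕ), d < i → Subsingleton (Abelian.Ext X Y i)

/-- The (right) global dimension of a ring, as an element of `ℕ∞`. -/
def globalDim (R : Type) [Ring R] : ℕ∞ :=
  sInf {i : ℕ∞ | ∃ d : ℕ, i = d ∧ globalDimLE R d}

open Limits
attribute [local instance] Abelian.hasFiniteBiproducts

lemma pd_transfer {C D : Type 1} [Category.{0} C] [Category.{0} D] [Abelian C] [Abelian D]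
    [EnoughInjectives C] (F : C ⥤ D) [F.Additive] [PreservesFiniteLimits F]
    [PreservesFiniteColimits F] [F.Full] [F.Faithful] [F.PreservesInjectiveObjects] (n : ℕ)
    (h : ∀ X : D, HasProjectiveDimensionLT X n) (X : C) : HasProjectiveDimensionLT X n := by
  let := HasExt.standard C
  let := HasExt.standard D
  refine HasProjectiveDimensionLT.mk fun i hi Y e => ?_
  have hb := (Functor.mapExt_bijective_of_preservesInjectiveObjects F X Y i).1
  have := h (F.obj X)
  exact hb (Abelian.Ext.eq_zero_of_hasProjectiveDimensionLT _ n hi |>.trans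
    (Abelian.Ext.eq_zero_of_hasProjectiveDimensionLT _ n hi).symm)

lemma pd_equiv {C D : Type 1} [Category.{0} C] [Category.{0} D] [Abelian C] [Abelian D]
    [EnoughInjectives C] (F : C ⥤ D) [F.IsEquivalence] (n : ℕ)
    (h : ∀ X : D, HasProjectiveDimensionLT X n) (X : C) : HasProjectiveDimensionLT X n := by
  have : F.Additive := F.additive_of_preserves_binary_products
  have : F.PreservesInjectiveObjects :=
    Functor.preservesInjectiveObjects_of_adjunction_of_preservesMonomorphisms F.asEquivalence.symm.toAdjunction
  exact pd_transfer F n h X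

lemma gd_iff (R : Type) [Ring R] (d : ℕ) :
    globalDimLE R d ↔ ∀ X : ModuleCat.{0} Rᵐᵒᵖ, HasProjectiveDimensionLT X (d + 1) := by
  constructor
  · intro h X
    refine HasProjectiveDimensionLT.mk fun i hi Y e => ?_
    have := h X Y i hi
    exact Subsingleton.elim _ _
  · intro h X Y i hi
    have := h X
    exact HasProjectiveDimensionLT.subsingleton X (d + 1) i hi Y

lemma globalDim_le_iff (R : Type) [Ring R] (d : ℕ) :
    globalDim R ≤ d ↔ globalDimLE R d := by
  constructor
  · intro h
    have hne : {i : ℕ∞ | ∃ d : ℕ, i = d ∧ globalDimLE R d}.Nonempty := by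
      by_contra hn
      rw [Set.not_nonempty_iff_eq_empty] at hn
      rw [globalDim, hn, sInf_empty] at h
      exact absurd h (by simp)
    obtain ⟨e, he, h2⟩ := csInf_mem hne
    rw [globalDim, he] at h
    have h' : e ≤ d := by exact_mod_cast h
    intro X Y i hi
    exact h2 X Y i (by omega)
  · intro h
    exact sInf_le ⟨d, rfl, h⟩

lemma globalDim_congr (R S : Type) [Ring R] [Ring S]
    (h : ∀ d, globalDimLE R d ↔ globalDimLE S d) : globalDim R = globalDim S := by
  simp only [globalDim, h]

section part1
variable {C : Type 1} [Category.{0} C] [Abelian C] (G : C)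


instance projFG : Projective ((preadditiveCoyonedaObj G).obj G) := by
  let e : ((End G)ᵐᵒᵖ) ≃ₗ[(End G)ᵐᵒᵖ] ((preadditiveCoyonedaObj G).obj G) :=
    { toFun := fun x => x.unop
      invFun := fun x => op x
      left_inv := fun _ => rfl
      right_inv := fun _ => rfl
      map_add' := fun _ _ => rfl
      map_smul' := fun x y => rfl }
  have : Module.Projective (End G)ᵐᵒᵖ ((preadditiveCoyonedaObj G).obj G) := Module.Projective.of_equiv e
  exact (IsProjective.iff_projective ((preadditiveCoyonedaObj G).obj G)).1 this

instance projFGn (n : ℕ) : Projective ((preadditiveCoyonedaObj G).obj (⨁ fun _ : Fin n => G)) := by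
  have : ∀ b : Fin n, Projective (((preadditiveCoyonedaObj G).obj ∘ fun _ : Fin n => G) b) := fun _ => projFG G
  have : Projective (⨁ ((preadditiveCoyonedaObj G).obj ∘ fun _ : Fin n => G)) := inferInstance
  exact Projective.of_iso ((preadditiveCoyonedaObj G).mapBiproduct (fun _ : Fin n => G)).symm this

/-- an endomorphism as an element of the acting ring -/
def sm {G : C} (a : G ⟶ G) : (End G)ᵐᵒᵖ := op a

lemma sm_smul {G K : C} (a : G ⟶ G) (f : G ⟶ K) : sm a • f = a ≫ f := rfl

/-- post-composition as a linear map -/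
def post {X Y : C} (p : X ⟶ Y) : (G ⟶ X) →ₗ[(End G)ᵐᵒᵖ] (G ⟶ Y) where
  toFun g := g ≫ p
  map_add' _ _ := Preadditive.add_comp _ _ _ _ _ _
  map_smul' _ _ := Category.assoc _ _ _

lemma hom_eq_sum {X : C} {n : ℕ} (f : X ⟶ (⨁ fun _ : Fin n => G)) :
    f = ∑ i, (f ≫ biproduct.π (fun _ : Fin n => G) i) ≫ biproduct.ι (fun _ : Fin n => G) i := by
  have h := f ≫= biproduct.total (f := fun _ : Fin n => G)
  rw [Category.comp_id, Preadditive.comp_sum] at h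
  conv_lhs => rw [← h]
  simp only [Category.assoc]

lemma finFGn (n : ℕ) : Module.Finite (End G)ᵐᵒᵖ (G ⟶ (⨁ fun _ : Fin n => G)) := by
  refine ⟨Submodule.fg_iff_exists_fin_generating_family.2
    ⟨n, fun i => biproduct.ι (fun _ : Fin n => G) i, ?_⟩⟩
  rw [eq_top_iff]
  intro f _
  rw [hom_eq_sum G f]
  refine Submodule.sum_mem _ fun i _ => ?_
  rw [← sm_smul]
  exact Submodule.smul_mem _ _ (Submodule.subset_span ⟨i, rfl⟩)

/-- a submodule of `Hom(G,K)` that is finitely generated is the range of `F π`. -/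
lemma exists_range (K : C) (T : Submodule (End G)ᵐᵒᵖ (G ⟶ K)) (hT : T.FG) :
    ∃ (n : ℕ) (π : (⨁ fun _ : Fin n => G) ⟶ K), LinearMap.range (post G π) = T := by
  obtain ⟨n, g, hg⟩ := Submodule.fg_iff_exists_fin_generating_family.1 hT
  refine ⟨n, biproduct.desc g, le_antisymm ?_ ?_⟩
  · rintro _ ⟨s, rfl⟩
    rw [hom_eq_sum G s, map_sum]
    refine Submodule.sum_mem _ fun i _ => ?_
    have : post G (biproduct.desc g) ((s ≫ biproduct.π (fun _ : Fin n => G) i) ≫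
        biproduct.ι (fun _ : Fin n => G) i)
      = sm (s ≫ biproduct.π (fun _ : Fin n => G) i) • g i := by
      rw [sm_smul]
      change (_ ≫ _) ≫ _ = _
      simp only [Category.assoc, biproduct.ι_desc]
    rw [this]
    exact Submodule.smul_mem _ _ (by rw [← hg]; exact Submodule.subset_span ⟨i, rfl⟩)
  · rw [← hg, Submodule.span_le]
    rintro _ ⟨i, rfl⟩
    exact ⟨biproduct.ι (fun _ : Fin n => G) i, biproduct.ι_desc g i⟩

universe w
variable [HasExt.{w} C]

lemma ext_biprod (n i : ℕ) (h : Subsingleton (Abelian.Ext G G i)) :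
    ∀ e : Abelian.Ext G (⨁ fun _ : Fin n => G) i, e = 0 := by
  intro e
  rw [← e.comp_mk₀_id, ← biproduct.total, ← Abelian.Ext.addEquiv₀_symm_apply, map_sum,
    ← Abelian.Ext.bilinearComp_apply_apply, map_sum]
  refine Finset.sum_eq_zero fun j _ => ?_
  rw [Abelian.Ext.bilinearComp_apply_apply, Abelian.Ext.addEquiv₀_symm_apply,
    ← Abelian.Ext.mk₀_comp_mk₀,
    ← Abelian.Ext.comp_assoc_of_third_deg_zero, Subsingleton.elim (e.comp _ _) 0,
    Abelian.Ext.zero_comp]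

lemma ker_zero {X K : C} (π : X ⟶ K) (x : G ⟶ kernel π) : (x ≫ kernel.ι π) ≫ π = 0 := by simp

lemma kerSES {X K : C} (π : X ⟶ K) [Epi π] :
    (ShortComplex.mk (kernel.ι π) π (kernel.condition π)).ShortExact where
  exact := ShortComplex.exact_kernel π

lemma kerSES_map {X K : C} (π : X ⟶ K) (h : Epi ((preadditiveCoyonedaObj G).map π)) :
    (ShortComplex.mk ((preadditiveCoyonedaObj G).map (kernel.ι π))
      ((preadditiveCoyonedaObj G).map π)
      (ModuleCat.hom_ext (LinearMap.ext fun x => ker_zero G π x))).ShortExact where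
  exact := by
    rw [ShortComplex.moduleCat_exact_iff]
    intro x hx
    have hx' : (x : G ⟶ _) ≫ π = 0 := hx
    exact ⟨kernel.lift π x hx', kernel.lift_ι π x hx'⟩
  mono_f := by
    rw [ModuleCat.mono_iff_injective]; exact fun a b h => (cancel_mono (kernel.ι π)).1 h
  epi_g := h

lemma epi_of_range_top {X K : C} (π : X ⟶ K) (h : LinearMap.range (post G π) = ⊤) :
    Epi ((preadditiveCoyonedaObj G).map π) := by
  rw [ModuleCat.epi_iff_surjective]
  exact LinearMap.range_eq_top.1 h

variable [hN : IsNoetherianRing (End G)ᵐᵒᵖ] [(preadditiveCoyonedaObj G).Full]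
  [(preadditiveCoyonedaObj G).Faithful]

lemma F_inj {X Y : C} (a b : X ⟶ Y) (h : ∀ f : G ⟶ X, f ≫ a = f ≫ b) : a = b :=
  (preadditiveCoyonedaObj G).map_injective (ModuleCat.hom_ext (LinearMap.ext h))

lemma fin_of_mono {K : C} {n : ℕ} (i : K ⟶ (⨁ fun _ : Fin n => G)) [Mono i] :
    Module.Finite (End G)ᵐᵒᵖ (G ⟶ K) := by
  have := finFGn G n
  have : IsNoetherian (End G)ᵐᵒᵖ (G ⟶ (⨁ fun _ : Fin n => G)) := inferInstance
  exact Module.Finite.of_injective (post G i) (fun a b h => (cancel_mono i).1 h)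

/-- dimension shifting -/
lemma ext_vanish (d : ℕ) (hv : ∀ i : ℕ, 1 ≤ i → i < d → Subsingleton (Abelian.Ext G G i))
    (j : ℕ) : ∀ (K : C) (hfin : Module.Finite (End G)ᵐᵒᵖ (G ⟶ K))
    (hpd : HasProjectiveDimensionLT ((preadditiveCoyonedaObj G).obj K) (j + 1)) (i : ℕ), 1 ≤ i → i + j < d →
    ∀ e : Abelian.Ext G K i, e = 0 := by
  induction j with
  | zero =>
    intro K hfin hpd i hi hid e
    obtain ⟨n, π, hπ⟩ := exists_range G K ⊤ hfin.1
    have hep := epi_of_range_top G π hπ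
    have hpr : Projective ((preadditiveCoyonedaObj G).obj K) := projective_iff_hasProjectiveDimensionLT_one.2 hpd
    let σ := Projective.factorThru (𝟙 ((preadditiveCoyonedaObj G).obj K)) ((preadditiveCoyonedaObj G).map π)
    obtain ⟨s, hs⟩ := (preadditiveCoyonedaObj G).map_surjective σ
    have hsp : s ≫ π = 𝟙 K := (preadditiveCoyonedaObj G).map_injective (by
      rw [CategoryTheory.Functor.map_comp, hs, CategoryTheory.Functor.map_id]; exact Projective.factorThru_comp _ _)
    rw [← e.comp_mk₀_id, ← hsp, ← Abelian.Ext.mk₀_comp_mk₀,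
      ← Abelian.Ext.comp_assoc_of_third_deg_zero,
      ext_biprod G n i (hv i hi (by omega)) (e.comp _ _), Abelian.Ext.zero_comp]
  | succ j ih =>
    intro K hfin hpd i hi hid e
    obtain ⟨n, π, hπ⟩ := exists_range G K ⊤ hfin.1
    have hep := epi_of_range_top G π hπ
    have : Epi π := Preadditive.epi_of_cancel_zero _ fun {Z} h hh => F_inj G _ _ fun f => by
      have hf : f ∈ LinearMap.range (post G π) := by rw [hπ]; trivial
      obtain ⟨s, rfl⟩ := hf
      change (s ≫ π) ≫ h = _
      rw [Category.assoc, hh, comp_zero, comp_zero]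
    have h1 := kerSES_map G π hep
    have h2 := kerSES π
    have hfin' : Module.Finite (End G)ᵐᵒᵖ (G ⟶ kernel π) := fin_of_mono G (kernel.ι π)
    have hpd' : HasProjectiveDimensionLT ((preadditiveCoyonedaObj G).obj (kernel π)) (j + 1) :=
      h1.hasProjectiveDimensionLT_X₁ (j + 1)
        (inferInstanceAs (HasProjectiveDimensionLT ((preadditiveCoyonedaObj G).obj (⨁ fun _ : Fin n => G)) (j + 1))) hpd
    have hz := ih (kernel π) hfin' hpd' (i + 1) (by omega) (by omega)
    obtain ⟨x, hx⟩ := Abelian.Ext.covariant_sequence_exact₃ G h2 e rfl (hz _)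
    rw [← hx, ext_biprod G n i (hv i hi (by omega)) x, Abelian.Ext.zero_comp]

/-- The key splitting. -/
lemma key_split (d : ℕ) (hv : ∀ i : ℕ, 1 ≤ i → i < d → Subsingleton (Abelian.Ext G G i))
    (hd : ∀ X : ModuleCat.{0} (End G)ᵐᵒᵖ, HasProjectiveDimensionLT X (d + 1))
    (T : Submodule (End G)ᵐᵒᵖ (G ⟶ G))
    (hT : ∀ (Z : C) (h : G ⟶ Z), (∀ f ∈ T, f ≫ h = 0) → h = 0) : 𝟙 G ∈ T := by
  have hfG : Module.Finite (End G)ᵐᵒᵖ (G ⟶ G) :=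
    ⟨⟨{𝟙 G}, by
      rw [eq_top_iff]
      intro f _
      have : f = sm f • 𝟙 G := by rw [sm_smul, Category.comp_id]
      rw [this]
      exact Submodule.smul_mem _ _ (Submodule.subset_span (by simp))⟩⟩
  have hTfg : T.FG := IsNoetherian.noetherian T
  obtain ⟨n, π, hπ⟩ := exists_range G G T hTfg
  have hepi : Epi π := Preadditive.epi_of_cancel_zero _ fun {Z} h hh => hT Z h fun f hf => by
    rw [← hπ] at hf
    obtain ⟨s, rfl⟩ := hf
    change (s ≫ π) ≫ h = 0
    rw [Category.assoc, hh, comp_zero]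
  suffices h : ∃ s : G ⟶ _, s ≫ π = 𝟙 G by
    obtain ⟨s, hs⟩ := h
    rw [← hπ]; exact ⟨s, hs⟩
  -- dimension of T
  let ST : ShortComplex (ModuleCat.{0} (End G)ᵐᵒᵖ) :=
    ShortComplex.mk (ModuleCat.ofHom T.subtype : ModuleCat.of _ T ⟶ (preadditiveCoyonedaObj G).obj G)
      (ModuleCat.ofHom T.mkQ : (preadditiveCoyonedaObj G).obj G ⟶ ModuleCat.of _ ((G ⟶ G) ⧸ T)) (by
        ext x; exact (Submodule.Quotient.mk_eq_zero T).2 x.2)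
  have hST : ST.ShortExact :=
    { exact := by
        rw [ShortComplex.moduleCat_exact_iff]
        intro x hx
        exact ⟨⟨x, (Submodule.Quotient.mk_eq_zero T).1 hx⟩, rfl⟩
      mono_f := by
        rw [ModuleCat.mono_iff_injective]; exact T.injective_subtype
      epi_g := by
        rw [ModuleCat.epi_iff_surjective]; exact T.mkQ_surjective }
  -- the corestriction
  let ρ : (preadditiveCoyonedaObj G).obj (⨁ fun _ : Fin n => G) ⟶ ModuleCat.of (End G)ᵐᵒᵖ T :=
    ModuleCat.ofHom ((post G π).codRestrict T fun x => hπ ▸ ⟨x, rfl⟩)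
  have hρ : Epi ρ := by
    rw [ModuleCat.epi_iff_surjective]
    rintro ⟨y, hy⟩
    have hy' := hy
    rw [← hπ] at hy'
    obtain ⟨x, hx⟩ := hy'
    exact ⟨x, Subtype.ext hx⟩
  have hzero : (preadditiveCoyonedaObj G).map (kernel.ι π) ≫ ρ = 0 :=
    ModuleCat.hom_ext (LinearMap.ext fun x => Subtype.ext
      (ker_zero G π x))
  have hPG : Projective ST.X₂ := projFG G
  by_cases hd2 : 2 ≤ d
  · obtain ⟨k, rfl⟩ : ∃ k, d = k + 2 := ⟨d - 2, by omega⟩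
    have hpT : HasProjectiveDimensionLT (ModuleCat.of (End G)ᵐᵒᵖ T) (k + 2) :=
      hST.hasProjectiveDimensionLT_X₁ (k + 2) inferInstance (hd _)
    let S2 : ShortComplex (ModuleCat.{0} (End G)ᵐᵒᵖ) :=
      ShortComplex.mk ((preadditiveCoyonedaObj G).map (kernel.ι π)) ρ hzero
    have hS2 : S2.ShortExact :=
      { exact := by
          rw [ShortComplex.moduleCat_exact_iff]
          intro x hx
          have hx' : (x : G ⟶ _) ≫ π = 0 := congrArg Subtype.val hx
          exact ⟨kernel.lift π x hx', kernel.lift_ι π x hx'⟩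
        mono_f := by
          rw [ModuleCat.mono_iff_injective]; exact fun a b h => (cancel_mono (kernel.ι π)).1 h
        epi_g := hρ }
    have hpK : HasProjectiveDimensionLT ((preadditiveCoyonedaObj G).obj (kernel π)) (k + 1) :=
      hS2.hasProjectiveDimensionLT_X₁ (k + 1)
        (inferInstanceAs (HasProjectiveDimensionLT ((preadditiveCoyonedaObj G).obj (⨁ fun _ : Fin n => G)) (k + 1))) hpT
    have hz := ext_vanish G (k + 2) hv k (kernel π) (fin_of_mono G (kernel.ι π)) hpK 1 le_rfl
      (by omega)
    obtain ⟨x, hx⟩ := Abelian.Ext.covariant_sequence_exact₃ G (kerSES π) (Abelian.Ext.mk₀ (𝟙 G))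
      (zero_add 1) (hz _)
    obtain ⟨s, rfl⟩ := Abelian.Ext.homEquiv₀.symm.surjective x
    exact ⟨s, Abelian.Ext.homEquiv₀.symm.injective (by simpa using hx)⟩
  · have hpT : HasProjectiveDimensionLT (ModuleCat.of (End G)ᵐᵒᵖ T) 1 :=
      hST.hasProjectiveDimensionLT_X₁ 1 inferInstance (by
        have := hd ST.X₃
        exact hasProjectiveDimensionLT_of_ge _ (d + 1) 2 (by omega))
    have hpr : Projective (ModuleCat.of (End G)ᵐᵒᵖ T) :=
      projective_iff_hasProjectiveDimensionLT_one.2 hpT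
    let σ := Projective.factorThru (𝟙 (ModuleCat.of (End G)ᵐᵒᵖ T)) ρ
    have hσ : σ ≫ ρ = 𝟙 _ := Projective.factorThru_comp _ _
    obtain ⟨p, hp⟩ := (preadditiveCoyonedaObj G).map_surjective (ρ ≫ σ)
    have hpx : ∀ f : G ⟶ (⨁ fun _ : Fin n => G), f ≫ p = σ.hom (ρ.hom f) := fun f =>
      congrArg (fun q => q.hom f) hp
    have h1 : p ≫ π = π := F_inj G _ _ fun f => by
      rw [← Category.assoc, hpx]
      have := congrArg (fun q => (q.hom (ρ.hom f)).1) hσ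
      exact this
    have h2 : kernel.ι π ≫ p = 0 := F_inj G _ _ fun f => by
      rw [← Category.assoc, hpx]
      have h3 : ρ.hom (f ≫ kernel.ι π) = 0 := congrArg (fun q => q.hom f) hzero
      rw [h3, map_zero, comp_zero]; rfl
    refine ⟨Abelian.epiDesc π p h2, ?_⟩
    rw [← cancel_epi π, ← Category.assoc, Abelian.comp_epiDesc, h1, Category.comp_id]

end part1

section part2
variable {R : Type} [Ring R] (M : Type) [AddCommGroup M] [Module R M]

/-- the object of the module category -/
abbrev GM (R : Type) [Ring R] (M : Type) [AddCommGroup M] [Module R M] : ModuleCat.{0} R :=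
  ModuleCat.of R M

/-- the inclusions into the direct sum -/
def vI (I : Type) (i : I) : GM R M ⟶ GM R (I →₀ M) := ModuleCat.ofHom (Finsupp.lsingle i)

/-- the projections of the direct sum -/
def pI (I : Type) (i : I) : GM R (I →₀ M) ⟶ GM R M := ModuleCat.ofHom (Finsupp.lapply i)

lemma vI_pI_self (I : Type) (i : I) : vI (R := R) M I i ≫ pI M I i = 𝟙 _ := by
  ext m; simp [vI, pI]

lemma vI_pI_ne (I : Type) (i j : I) (h : i ≠ j) : vI (R := R) M I i ≫ pI M I j = 0 := by
  ext m; simp [vI, pI, h]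

/-- comparison map -/
def cmp (R : Type) [Ring R] (M : Type) [AddCommGroup M] [Module R M] (I : Type) :
    (I →₀ (End (GM R M))ᵐᵒᵖ) →ₗ[(End (GM R M))ᵐᵒᵖ] (GM R M ⟶ GM R (I →₀ M)) :=
  Finsupp.linearCombination _ (vI M I)

lemma cmp_post (I : Type) (j : I) (l : I →₀ (End (GM R M))ᵐᵒᵖ) :
    post (GM R M) (pI M I j) (cmp R M I l) = (l j).unop := by
  classical
  rw [cmp, Finsupp.linearCombination_apply, Finsupp.sum, map_sum]
  have : ∀ i, post (GM R M) (pI M I j) (l i • vI M I i) = if i = j then (l j).unop else 0 := by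
    intro i
    rw [map_smul]
    change (l i).unop ≫ (vI M I i ≫ pI M I j) = _
    split_ifs with h
    · subst h; rw [vI_pI_self, Category.comp_id]
    · rw [vI_pI_ne _ _ _ _ h, comp_zero]
  rw [Finset.sum_congr rfl fun i _ => this i, Finset.sum_ite_eq']
  split_ifs with h
  · rfl
  · rw [Finsupp.notMem_support_iff.1 h]; rfl

lemma cmp_bij [Module.Finite R M] (I : Type) : Function.Bijective (cmp R M I) := by
  classical
  constructor
  · intro a b h
    ext j
    have := congrArg (post (GM R M) (pI M I j)) h
    rw [cmp_post, cmp_post] at this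
    exact unop_injective this
  · intro f
    obtain ⟨s, hs⟩ := (inferInstance : Module.Finite R M).1
    let t : Finset I := s.biUnion fun m => (f.hom m : I →₀ M).support
    have ht : ∀ m : M, ((f.hom m : I →₀ M).support : Set I) ⊆ t := by
      intro m
      have hm : m ∈ Submodule.span R (s : Set M) := by rw [hs]; trivial
      have : Submodule.span R (s : Set M) ≤ (Finsupp.supported M R (t : Set I)).comap f.hom := by
        rw [Submodule.span_le]
        intro x hx
        change ((f.hom x : I →₀ M).support : Set I) ⊆ t
        exact_mod_cast Finset.subset_biUnion_of_mem (fun m => (f.hom m : I →₀ M).support) hx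
      exact this hm
    refine ⟨∑ i ∈ t, Finsupp.single i (sm (f ≫ pI M I i)), ?_⟩
    rw [map_sum]
    have : ∀ i, cmp R M I (Finsupp.single i (sm (f ≫ pI M I i))) = (f ≫ pI M I i) ≫ vI M I i := by
      intro i
      rw [cmp, Finsupp.linearCombination_single, sm_smul]
    rw [Finset.sum_congr rfl fun i _ => this i]
    ext m : 2
    rw [ModuleCat.hom_sum, LinearMap.sum_apply]
    change ∑ i ∈ t, Finsupp.single i ((f.hom m : I →₀ M) i) = (f.hom m : I →₀ M)
    conv_rhs => rw [← Finsupp.sum_single (f.hom m : I →₀ M)]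
    rw [Finsupp.sum_of_support_subset _ (by exact_mod_cast ht m)]
    simp

lemma ess [Module.Finite R M] [Module.Projective R M]
    [(preadditiveCoyonedaObj (GM R M)).Full] : (preadditiveCoyonedaObj (GM R M)).EssSurj := by
  refine ⟨fun N => ?_⟩
  let S := (End (GM R M))ᵐᵒᵖ
  let e : ∀ I : Type, (I →₀ S) ≃ₗ[S] (GM R M ⟶ GM R (I →₀ M)) := fun I =>
    LinearEquiv.ofBijective (cmp R M I) (cmp_bij M I)
  let f : (N →₀ S) →ₗ[S] N := Finsupp.linearCombination S id
  have hf : Function.Surjective f := Finsupp.linearCombination_id_surjective S N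
  let K := LinearMap.ker f
  let g : (K →₀ S) →ₗ[S] (N →₀ S) := Finsupp.linearCombination S Subtype.val
  have hg : LinearMap.range g = K := by
    rw [Finsupp.range_linearCombination, Subtype.range_coe]; exact Submodule.span_eq K
  let g' : (GM R M ⟶ GM R (K →₀ M)) →ₗ[S] (GM R M ⟶ GM R (N →₀ M)) :=
    (e N).toLinearMap ∘ₗ g ∘ₗ (e K).symm.toLinearMap
  obtain ⟨u, hu⟩ := (preadditiveCoyonedaObj (GM R M)).map_surjective
    (X := GM R (K →₀ M)) (Y := GM R (N →₀ M)) (ModuleCat.ofHom g')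
  have hu' : ∀ x : GM R M ⟶ GM R (K →₀ M), x ≫ u = g' x := fun x =>
    congrArg (fun q => q.hom x) hu
  let W := LinearMap.range u.hom
  let q : GM R (N →₀ M) ⟶ GM R ((N →₀ M) ⧸ W) := ModuleCat.ofHom W.mkQ
  let a : (GM R M ⟶ GM R (N →₀ M)) →ₗ[S] N := f ∘ₗ (e N).symm.toLinearMap
  have ha : Function.Surjective a := hf.comp (e N).symm.surjective
  let b := post (GM R M) q
  have hb : Function.Surjective b := by
    intro y
    obtain ⟨h, hh⟩ := Module.projective_lifting_property W.mkQ y.hom W.mkQ_surjective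
    exact ⟨ModuleCat.ofHom h, ModuleCat.hom_ext hh⟩
  have hab : LinearMap.ker b = LinearMap.ker a := by
    ext x
    constructor
    · intro hx
      have hx' : x ≫ q = 0 := hx
      have hmem : ∀ m, x.hom m ∈ W := fun m => by
        have := congrArg (fun z => z.hom m) hx'
        exact (Submodule.Quotient.mk_eq_zero W).1 this
      obtain ⟨h, hh⟩ := Module.projective_lifting_property u.hom.rangeRestrict
        (x.hom.codRestrict W hmem) u.hom.surjective_rangeRestrict
      have hxu : x = ModuleCat.ofHom h ≫ u := by
        refine ModuleCat.hom_ext (LinearMap.ext fun m => ?_)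
        exact (congrArg (fun z => ((z m : W) : N →₀ M)) hh).symm
      rw [hxu, hu']
      change f ((e N).symm (e N (g ((e K).symm _)))) = 0
      rw [LinearEquiv.symm_apply_apply]
      have : g ((e K).symm (ModuleCat.ofHom h)) ∈ K := hg.le ⟨_, rfl⟩
      exact this
    · intro hx
      have hx' : (e N).symm x ∈ K := hx
      rw [← hg] at hx'
      obtain ⟨y, hy⟩ := hx'
      have : x = (e K y) ≫ u := by
        rw [hu']
        change x = e N (g ((e K).symm (e K y)))
        rw [LinearEquiv.symm_apply_apply, hy, LinearEquiv.apply_symm_apply]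
      rw [this]
      change (e K y ≫ u) ≫ q = 0
      have huq : u ≫ q = 0 := ModuleCat.hom_ext (LinearMap.ext fun z =>
        (Submodule.Quotient.mk_eq_zero W).2 ⟨z, rfl⟩)
      rw [Category.assoc, huq, comp_zero]
  let E : (GM R M ⟶ GM R ((N →₀ M) ⧸ W)) ≃ₗ[S] N :=
    (b.quotKerEquivOfSurjective hb).symm ≪≫ₗ Submodule.quotEquivOfEq _ _ hab ≪≫ₗ
      a.quotKerEquivOfSurjective ha
  exact ⟨GM R ((N →₀ M) ⧸ W), ⟨E.toModuleIso⟩⟩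

end part2

section part3
variable (A : Type) [Ring A] (M : Type) [AddCommGroup M] [Module Aᵐᵒᵖ M]

/-- `1 ↦ x` -/
def evx {X : ModuleCat.{0} Aᵐᵒᵖ} (x : X) : A →ₗ[Aᵐᵒᵖ] X where
  toFun a := op a • x
  map_add' a b := by rw [MulOpposite.op_add, add_smul]
  map_smul' r a := by
    change op (a * r.unop) • x = r • op a • x
    rw [← mul_smul]; rfl

lemma evx_one {X : ModuleCat.{0} Aᵐᵒᵖ} (x : X) : evx A x 1 = x := by
  change op (1 : A) • x = x
  rw [op_one, one_smul]

lemma sep (hgen : IsRGenerator A M) : IsSeparator (GM Aᵐᵒᵖ M) := by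
  refine (isSeparator_def _).2 fun X Y f g h => ?_
  obtain ⟨k, p, s, hps⟩ := hgen
  refine ModuleCat.hom_ext (LinearMap.ext fun x => ?_)
  have key : f.hom ∘ₗ evx A x ∘ₗ p = g.hom ∘ₗ evx A x ∘ₗ p := by
    refine LinearMap.pi_ext' fun i => ?_
    have := h (ModuleCat.ofHom ((evx A x ∘ₗ p) ∘ₗ LinearMap.single Aᵐᵒᵖ (fun _ : Fin k => M) i))
    exact congrArg ModuleCat.Hom.hom this
  have h1 : p (s 1) = 1 := LinearMap.congr_fun hps 1
  have := LinearMap.congr_fun key (s 1)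
  change f.hom (evx A x (p (s 1))) = g.hom (evx A x (p (s 1))) at this
  rwa [h1, evx_one] at this

/-- maps factoring through finite projectives -/
def Tfp (R : Type) [Ring R] (G : ModuleCat.{0} R) : Submodule (End G)ᵐᵒᵖ (G ⟶ G) where
  carrier := {f | ∃ P : ModuleCat.{0} R, Module.Finite R P ∧ Module.Projective R P ∧
    ∃ (a : G ⟶ P) (b : P ⟶ G), f = a ≫ b}
  zero_mem' := ⟨ModuleCat.of R R, inferInstance, inferInstance, 0, 0, by simp⟩
  add_mem' := by
    rintro _ _ ⟨P, h1, h2, a, b, rfl⟩ ⟨P', h1', h2', a', b', rfl⟩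
    refine ⟨ModuleCat.of R (P × P'), inferInstanceAs (Module.Finite R (P × P')),
      inferInstanceAs (Module.Projective R (P × P')), ModuleCat.ofHom (a.hom.prod a'.hom),
      ModuleCat.ofHom (b.hom.coprod b'.hom), ?_⟩
    exact ModuleCat.hom_ext (LinearMap.ext fun x => rfl)
  smul_mem' := by
    rintro c _ ⟨P, h1, h2, a, b, rfl⟩
    exact ⟨P, h1, h2, c.unop ≫ a, b, (Category.assoc _ _ _).symm⟩

lemma Tfp_sep (R : Type) [Ring R] (G : ModuleCat.{0} R) (hG : IsSeparator G)
    (Z : ModuleCat.{0} R) (h : G ⟶ Z) (hh : ∀ f ∈ Tfp R G, f ≫ h = 0) : h = 0 := by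
  refine ModuleCat.hom_ext (LinearMap.ext fun m => ?_)
  let b : ModuleCat.of R R ⟶ G := ModuleCat.ofHom (LinearMap.toSpanSingleton R G m)
  have : b ≫ h = 0 := (isSeparator_def _).1 hG _ _ fun a => by
    rw [← Category.assoc, comp_zero]
    exact hh _ ⟨ModuleCat.of R R, inferInstance, inferInstance, a, b, rfl⟩
  have h2 : h.hom ((1 : R) • m) = 0 := congrArg (fun z => z.hom (1 : R)) this
  rw [one_smul] at h2
  exact h2

lemma Tfp_id (R : Type) [Ring R] (M : Type) [AddCommGroup M] [Module R M]
    (h : 𝟙 (GM R M) ∈ Tfp R (GM R M)) : Module.Finite R M ∧ Module.Projective R M := by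
  obtain ⟨P, h1, h2, a, b, hab⟩ := h
  have hba : b.hom ∘ₗ a.hom = LinearMap.id := (congrArg ModuleCat.Hom.hom hab).symm
  exact ⟨Module.Finite.of_surjective b.hom fun m => ⟨a.hom m, LinearMap.congr_fun hba m⟩,
    Module.Projective.of_split a.hom b.hom hba⟩

/-- the ring iso -/
def eqS : (End (GM Aᵐᵒᵖ M))ᵐᵒᵖ ≃+* (Module.End Aᵐᵒᵖ M)ᵐᵒᵖ :=
  RingEquiv.op (ModuleCat.endRingEquiv (GM Aᵐᵒᵖ M))

lemma pd_ringEquiv {R S : Type} [Ring R] [Ring S] (e : R ≃+* S) (n : ℕ)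
    (h : ∀ X : ModuleCat.{0} R, HasProjectiveDimensionLT X n) (X : ModuleCat.{0} S) :
    HasProjectiveDimensionLT X n :=
  pd_equiv (ModuleCat.restrictScalarsEquivalenceOfRingEquiv e).functor n h X

end part3

/-- Let `M` be a generator over `A` such that `End_A(M)` is right
noetherian of finite global dimension `d`. If `Ext^i_A(M, M) = 0` for `i = 1, …, d − 1`,
then `M` is a finitely generated projective `A`-module and `A` has global dimension `d`. -/
theorem generator_with_vanishing_ext_is_projective
    (A : Type) [Ring A] (M : Type) [AddCommGroup M] [Module Aᵐᵒᵖ M]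
    (hgen : IsRGenerator A M)
    (hnoeth : IsNoetherianRing (Module.End Aᵐᵒᵖ M)ᵐᵒᵖ)
    (d : ℕ) (hd : globalDim (Module.End Aᵐᵒᵖ M) = (d : ℕ∞))
    (hvanish : ∀ i : ℕ, 1 ≤ i → i < d →
      Subsingleton (Abelian.Ext (ModuleCat.of Aᵐᵒᵖ M) (ModuleCat.of Aᵐᵒᵖ M) i)) :
    (Module.Finite Aᵐᵒᵖ M ∧ Module.Projective Aᵐᵒᵖ M) ∧ globalDim A = (d : ℕ∞) := by
  have hG := sep A M hgen
  have hfull := IsGrothendieckAbelian.GabrielPopescu.full (GM Aᵐᵒᵖ M) hG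
  have hfaith := (isSeparator_iff_faithful_preadditiveCoyonedaObj (GM Aᵐᵒᵖ M)).1 hG
  have hN : IsNoetherianRing (End (GM Aᵐᵒᵖ M))ᵐᵒᵖ :=
    isNoetherianRing_of_ringEquiv _ (eqS A M).symm
  have hgd : ∀ X : ModuleCat.{0} (End (GM Aᵐᵒᵖ M))ᵐᵒᵖ, HasProjectiveDimensionLT X (d + 1) :=
    pd_ringEquiv (eqS A M).symm (d + 1)
      ((gd_iff _ d).1 ((globalDim_le_iff _ d).1 hd.le))
  have hT := key_split (GM Aᵐᵒᵖ M) d hvanish hgd (Tfp _ _) (Tfp_sep _ _ hG)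
  obtain ⟨hfin, hproj⟩ := Tfp_id _ M hT
  refine ⟨⟨hfin, hproj⟩, ?_⟩
  have hess := ess (R := Aᵐᵒᵖ) M
  have hequiv : (preadditiveCoyonedaObj (GM Aᵐᵒᵖ M)).IsEquivalence := {}
  rw [← hd]
  refine globalDim_congr _ _ fun n => ?_
  rw [gd_iff, gd_iff]
  constructor
  · intro h
    exact pd_ringEquiv (eqS A M) (n + 1)
      (pd_equiv (preadditiveCoyonedaObj (GM Aᵐᵒᵖ M)).asEquivalence.inverse (n + 1) h)
  · intro h
    exact pd_equiv (preadditiveCoyonedaObj (GM Aᵐᵒᵖ M)) (n + 1)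
      (pd_ringEquiv (eqS A M).symm (n + 1) h)

end MoritaHochschild
end
end

section
/- For a Morita context (C,e) with A = eCe, B = e'Ce', M = e'Ce, N = eCe', the following are equivalent: (1) (C,e) is a Wedderburn context, i.e. C̄' = C/Ce'C = 0 and grade_C(C̄) ≥ 2 where C̄ = C/CeC; (2) (C,e) is a right Auslander context (the natural map C → End_A(M ⊕ A) is an isomorphism) and M is an A-generator; (3) (C,e') is a right Auslander context (the natural map C → End_B(N ⊕ B) is an isomorphism) and N is a Wedderburn projective over B; moreover in case (3), C̄ ≅ B/τ_N(B), the quotient of B by the trace ideal of N. -/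
open CategoryTheory MulOpposite

attribute [local instance] HasDerivedCategory.standard
attribute [local instance] CategoryTheory.hasExt_of_hasDerivedCategory

set_option maxHeartbeats 1000000
set_option synthInstance.maxHeartbeats 400000
set_option linter.unusedSectionVars false
set_option linter.unusedVariables false

noncomputable section
namespace MoritaHochschild

/-! ### Corners `pCq` of a ring with idempotents `p`, `q` -/

variable {C : Type} [Ring C]

/-- `Hom_R(P, R)` is a right module over `End_R(P)`, by precomposition. -/
instance homModuleEndOp (R : Type) [Ring R] (P : Type) [AddCommGroup P] [Module Rᵐᵒᵖ P] :
    Module (Module.End Rᵐᵒᵖ P)ᵐᵒᵖ (P →ₗ[Rᵐᵒᵖ] R) where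
  smul φ lam := lam.comp φ.unop
  one_smul lam := LinearMap.ext fun _ => rfl
  mul_smul φ ψ lam := LinearMap.ext fun _ => rfl
  smul_zero φ := LinearMap.ext fun _ => rfl
  smul_add φ lam lam' := LinearMap.ext fun _ => rfl
  add_smul φ ψ lam := LinearMap.ext fun x => map_add lam _ _
  zero_smul lam := LinearMap.ext fun x => map_zero lam

/-- A right `R`-module `P` is a Wedderburn projective if it is finitely generated
projective and the natural ring homomorphism
`R → End_{End_R(P)}(Hom_R(P, R))` is an isomorphism. -/
def IsWedderburnProjective (R : Type) [Ring R] (P : Type) [AddCommGroup P]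
    [Module Rᵐᵒᵖ P] : Prop :=
  Module.Finite Rᵐᵒᵖ P ∧ Module.Projective Rᵐᵒᵖ P ∧
  ∃ Φ : R →+* Module.End (Module.End Rᵐᵒᵖ P)ᵐᵒᵖ (P →ₗ[Rᵐᵒᵖ] R),
    (∀ (r : R) (lam : P →ₗ[Rᵐᵒᵖ] R) (x : P), (Φ r lam) x = r * lam x)
    ∧ Function.Bijective Φ

/-- The trace ideal `τ_P(R)` of a right `R`-module `P`: the two-sided ideal of `R`
generated by (equivalently, consisting of all sums of) values of `R`-linear functionals
on `P`; the image of the evaluation map `Hom_R(P, R) ⊗_{End_R(P)} P → R`. -/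
def traceIdeal (R : Type) [Ring R] (P : Type) [AddCommGroup P] [Module Rᵐᵒᵖ P] :
    TwoSidedIdeal R :=
  TwoSidedIdeal.span {r : R | ∃ (lam : P →ₗ[Rᵐᵒᵖ] R) (x : P), r = lam x}

/-! ### Grade at least two -/

/-- The quotient map as a map of right modules. -/
def cbarLin (e : C) : C →ₗ[Cᵐᵒᵖ] CBar e where
  toFun := cbarMk e
  map_add' := map_add _
  map_smul' := fun c x => by
    change cbarMk e (x * c.unop) = cbarMk e x * cbarMk e c.unop
    rw [map_mul]

/-- The right ideal `CeC`. -/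
abbrev idl (e : C) : Submodule Cᵐᵒᵖ C := LinearMap.ker (cbarLin e)

lemma mem_idl (e x : C) : x ∈ idl e ↔ x ∈ TwoSidedIdeal.span {e} := by
  rw [LinearMap.mem_ker]; exact cbarMk_eq_zero_iff e x

lemma idl_gen (e x y : C) : x * e * y ∈ idl e := by
  rw [mem_idl]
  exact TwoSidedIdeal.mul_mem_right _ _ _
    (TwoSidedIdeal.mul_mem_left _ _ _ (TwoSidedIdeal.subset_span rfl))

lemma idl_induction {e : C} {P : C → Prop} (h0 : P 0) (hadd : ∀ x y, P x → P y → P (x + y))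
    (hneg : ∀ x, P x → P (-x)) (hgen : ∀ x y, P (x * e * y)) {t : C} (ht : t ∈ idl e) : P t := by
  rw [mem_idl, TwoSidedIdeal.mem_span_iff_mem_addSubgroup_closure] at ht
  induction ht using AddSubgroup.closure_induction with
  | mem x hx =>
    obtain ⟨a, ha, y, -, rfl⟩ := hx
    obtain ⟨x, -, b, hb, rfl⟩ := ha
    rw [Set.mem_singleton_iff] at hb
    subst hb
    exact hgen x y
  | zero => exact h0
  | add x y _ _ hx hy => exact hadd x y hx hy
  | neg x _ hx => exact hneg x hx

/-- The short complex `CeC → C → C/CeC`. -/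
def idlSC (e : C) : ShortComplex (ModuleCat Cᵐᵒᵖ) :=
  ShortComplex.mk (ModuleCat.ofHom (idl e).subtype) (ModuleCat.ofHom (cbarLin e)) (by
    ext x; exact x.2)

lemma idlSC_exact (e : C) : (idlSC e).ShortExact where
  exact := by
    rw [ShortComplex.ShortExact.moduleCat_exact_iff_function_exact]
    exact LinearMap.exact_subtype_ker_map (cbarLin e)
  mono_f := (ModuleCat.mono_iff_injective _).2 Subtype.val_injective
  epi_g := (ModuleCat.epi_iff_surjective _).2 (cbarMk_surjective e)

lemma lin_apply (f : C →ₗ[Cᵐᵒᵖ] C) (x : C) : f x = f 1 * x := by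
  have := f.map_smul (op x) 1
  simpa using this

lemma grade_iff_ext (e : C) : 2 ≤ rgrade C (CBar e) ↔
    Subsingleton (Abelian.Ext (ModuleCat.of Cᵐᵒᵖ (CBar e)) (ModuleCat.of Cᵐᵒᵖ C) 0) ∧
    Subsingleton (Abelian.Ext (ModuleCat.of Cᵐᵒᵖ (CBar e)) (ModuleCat.of Cᵐᵒᵖ C) 1) := by
  unfold rgrade
  rw [le_sInf_iff]
  constructor
  · intro h
    constructor
    · by_contra h0
      have := h _ ⟨0, rfl, h0⟩
      exact absurd this (by decide)
    · by_contra h0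
      have := h _ ⟨1, rfl, h0⟩
      exact absurd this (by decide)
  · rintro ⟨h0, h1⟩ _ ⟨n, rfl, hn⟩
    match n with
    | 0 => exact absurd h0 hn
    | 1 => exact absurd h1 hn
    | n + 2 =>
      push_cast
      exact le_add_self

lemma grade_iff (e : C) : 2 ≤ rgrade C (CBar e) ↔
    (∀ c : C, (∀ x, c * x * e = 0) → c = 0) ∧
    (∀ f : idl e →ₗ[Cᵐᵒᵖ] C, ∃ c : C, ∀ x : idl e, f x = c * x.1) := by
  rw [grade_iff_ext]
  have hS := idlSC_exact e
  constructor
  · rintro ⟨h0, h1⟩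
    constructor
    · intro c hc
      have hk : ∀ x ∈ idl e, c * x = 0 := by
        intro x hx
        refine idl_induction (P := fun x => c * x = 0) (by simp)
          (fun x y hx hy => by rw [mul_add, hx, hy, add_zero])
          (fun x hx => by rw [mul_neg, hx, neg_zero]) (fun x y => ?_) hx
        rw [← mul_assoc, ← mul_assoc, hc, zero_mul]
      let l : C →ₗ[Cᵐᵒᵖ] C :=
        { toFun := fun x => c * x
          map_add' := mul_add c
          map_smul' := fun a x => (mul_assoc c x a.unop).symm }
      let φ : (idlSC e).X₂ ⟶ ModuleCat.of Cᵐᵒᵖ C := ModuleCat.ofHom l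
      have hφ : (Abelian.Ext.mk₀ (idlSC e).f).comp (Abelian.Ext.mk₀ φ) (zero_add 0) = 0 := by
        rw [Abelian.Ext.mk₀_comp_mk₀, Abelian.Ext.mk₀_eq_zero_iff]
        refine ModuleCat.hom_ext (LinearMap.ext fun x => ?_)
        exact hk x.1 x.2
      obtain ⟨y, hy⟩ := Abelian.Ext.contravariant_sequence_exact₂ hS _ _ hφ
      have hy0 : y = 0 := h0.elim _ _
      rw [hy0, Abelian.Ext.comp_zero] at hy
      have hz := (Abelian.Ext.mk₀_eq_zero_iff _).1 hy.symm
      have : l 1 = 0 := by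
        have h2 : φ.hom = 0 := by rw [hz]; rfl
        exact congrArg (fun q : C →ₗ[Cᵐᵒᵖ] C => q 1) h2
      simpa [l] using this
    · intro f
      let φ : (idlSC e).X₁ ⟶ ModuleCat.of Cᵐᵒᵖ C := ModuleCat.ofHom f
      obtain ⟨y, hy⟩ := Abelian.Ext.contravariant_sequence_exact₁ hS _ (Abelian.Ext.mk₀ φ)
        (add_zero 1) (h1.elim _ _)
      obtain ⟨g, rfl⟩ := (Abelian.Ext.mk₀_bijective _ _).2 y
      rw [Abelian.Ext.mk₀_comp_mk₀] at hy
      have h2 := (Abelian.Ext.mk₀_bijective _ _).1 hy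
      let g' : C →ₗ[Cᵐᵒᵖ] C := g.hom
      refine ⟨g' 1, fun x => ?_⟩
      rw [← lin_apply]
      have h3 : φ.hom x = ((idlSC e).f ≫ g).hom x := by rw [h2]
      exact h3
  · rintro ⟨hi, hs⟩
    have h0 : ∀ l : CBar e →ₗ[Cᵐᵒᵖ] C, l = 0 := by
      intro l
      have h1 : l (cbarMk e 1) = 0 := by
        apply hi
        intro x
        have h2 : l (cbarMk e 1) * (x * e) = l (op (x * e) • cbarMk e 1) :=
          (l.map_smul (op (x * e)) (cbarMk e 1)).symm
        rw [mul_assoc, h2, op_smul_cbar, ← map_mul, one_mul,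
          (cbarMk_eq_zero_iff e (x * e)).2, map_zero]
        rw [← mem_idl]
        simpa using idl_gen e x 1
      refine LinearMap.ext fun y => ?_
      obtain ⟨y, rfl⟩ := cbarMk_surjective e y
      have h3 : l (op y • cbarMk e 1) = l (cbarMk e 1) * y := l.map_smul (op y) _
      rw [op_smul_cbar, ← map_mul, one_mul, h1, zero_mul] at h3
      exact h3
    constructor
    · refine ⟨fun x y => ?_⟩
      obtain ⟨f, rfl⟩ := (Abelian.Ext.mk₀_bijective _ _).2 x
      obtain ⟨g, rfl⟩ := (Abelian.Ext.mk₀_bijective _ _).2 y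
      congr 1
      exact ModuleCat.hom_ext ((h0 f.hom).trans (h0 g.hom).symm)
    · refine subsingleton_of_forall_eq 0 fun x => ?_
      have : Projective (idlSC e).X₂ := by
        change Projective (ModuleCat.of Cᵐᵒᵖ C)
        have : Module.Projective Cᵐᵒᵖ C :=
          Module.Projective.of_equiv (MulOpposite.opLinearEquiv Cᵐᵒᵖ (M := C)).symm
        infer_instance
      obtain ⟨y, hy⟩ := Abelian.Ext.contravariant_sequence_exact₃ hS _ (n₁ := 1) x
        (Abelian.Ext.eq_zero_of_projective _) (add_zero 1)
      obtain ⟨f, rfl⟩ := (Abelian.Ext.mk₀_bijective _ _).2 y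
      obtain ⟨c, hc⟩ := hs f.hom
      let l : C →ₗ[Cᵐᵒᵖ] C :=
        { toFun := fun x => c * x
          map_add' := mul_add c
          map_smul' := fun a x => (mul_assoc c x a.unop).symm }
      let φ : (idlSC e).X₂ ⟶ ModuleCat.of Cᵐᵒᵖ C := ModuleCat.ofHom l
      have hf : f = (idlSC e).f ≫ φ := ModuleCat.hom_ext (LinearMap.ext fun x => hc x)
      rw [← hy, hf, ← Abelian.Ext.mk₀_comp_mk₀, ShortComplex.ShortExact.extClass_comp_assoc]
      rfl

/-! ### Elementwise reformulations -/

namespace Hand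

lemma hext {p q : C} {x y : Hand p q} (h : x.val = y.val) : x = y := val_injective h

@[simp] lemma val_neg {p q : C} (x : Hand p q) : (-x).val = -x.val := rfl

@[simp] lemma val_sum {p q : C} {ι : Type} (s : Finset ι) (f : ι → Hand p q) :
    (∑ i ∈ s, f i).val = ∑ i ∈ s, (f i).val := map_sum (valHom (p := p) (q := q)) f s

end Hand

open Hand

/-- Injectivity of `C → End(Cp)`. -/
def AInj (p : C) : Prop := ∀ c : C, (∀ x, c * x * p = 0) → c = 0

/-- Surjectivity of `C → End(Cp)`. -/
def ASurj (p : C) [Fact (IsIdempotentElem p)] : Prop :=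
  ∀ g : Module.End (Hand p p)ᵐᵒᵖ (Hand (1 : C) p), ∃ c : C, ∀ x, (g x).val = c * x.val

/-- Left multiplication. -/
def lmul (p : C) [Fact (IsIdempotentElem p)] :
    C →+* Module.End (Hand p p)ᵐᵒᵖ (Hand (1 : C) p) where
  toFun c :=
    { toFun := fun x => c • x
      map_add' := fun x y => hext (mul_add c x.val y.val)
      map_smul' := fun a x => hext (mul_assoc c x.val a.unop.val).symm }
  map_one' := LinearMap.ext fun x => hext (one_mul x.val)
  map_mul' a b := LinearMap.ext fun x => hext (mul_assoc a b x.val)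
  map_zero' := LinearMap.ext fun x => hext (zero_mul x.val)
  map_add' a b := LinearMap.ext fun x => hext (add_mul a b x.val)

lemma auslander_iff (p : C) [hp : Fact (IsIdempotentElem p)] :
    (∃ α : C →+* Module.End (Hand p p)ᵐᵒᵖ (Hand (1 : C) p),
      (∀ (c : C) (x : Hand (1 : C) p), (α c x).val = c * x.val) ∧ Function.Bijective α) ↔
    AInj p ∧ ASurj p := by
  constructor
  · rintro ⟨α, hα, hi, hs⟩
    constructor
    · intro c hc
      apply hi
      rw [map_zero]
      refine LinearMap.ext fun x => hext ?_
      rw [hα, ← right_absorb x, ← mul_assoc, hc]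
      rfl
    · intro g
      obtain ⟨c, rfl⟩ := hs g
      exact ⟨c, hα c⟩
  · rintro ⟨hi, hs⟩
    refine ⟨lmul p, fun c x => rfl, ?_, ?_⟩
    · rw [injective_iff_map_eq_zero]
      intro c hc
      apply hi
      intro x
      have h1 : lmul p c (compress 1 p x) = 0 := by rw [hc]; rfl
      have h2 : c * (1 * x * p) = 0 := congrArg val h1
      rw [mul_assoc]
      rwa [one_mul] at h2
    · intro g
      obtain ⟨c, hc⟩ := hs g
      exact ⟨c, LinearMap.ext fun x => hext (hc x).symm⟩

lemma grade_iff_auslander (e : C) [he : Fact (IsIdempotentElem e)] :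
    2 ≤ rgrade C (CBar e) ↔ AInj e ∧ ASurj e := by
  rw [grade_iff]
  refine and_congr_right fun hi => ⟨fun hs g => ?_, fun hs f => ?_⟩
  · -- extend `g` to the ideal `CeC`
    have key : ∀ t ∈ idl e, ∃ z : C, ∀ c, z * c * e = (g (compress 1 e (t * c))).val := by
      intro t ht
      refine idl_induction (P := fun t => ∃ z : C, ∀ c, z * c * e =
        (g (compress 1 e (t * c))).val) ?_ ?_ ?_ ?_ ht
      · refine ⟨0, fun c => ?_⟩
        have : compress 1 e (0 * c) = 0 := hext (by simp)
        rw [this, map_zero]; simp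
      · rintro x y ⟨z, hz⟩ ⟨w, hw⟩
        refine ⟨z + w, fun c => ?_⟩
        have : compress 1 e ((x + y) * c) = compress 1 e (x * c) + compress 1 e (y * c) :=
          hext (by simp [add_mul])
        rw [this, map_add, val_add, ← hz, ← hw, add_mul, add_mul]
      · rintro x ⟨z, hz⟩
        refine ⟨-z, fun c => ?_⟩
        have : compress 1 e (-x * c) = - compress 1 e (x * c) :=
          hext (by simp)
        rw [this, map_neg, val_neg, ← hz, neg_mul, neg_mul]
      · intro x y
        refine ⟨(g (compress 1 e x)).val * y, fun c => ?_⟩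
        have : compress 1 e (x * e * y * c) = op (compress e e (y * c)) • compress 1 e x := by
          refine hext ?_
          simp only [val_compress, val_op_smul, unop_op, one_mul, mul_assoc]
          rw [← mul_assoc e e, he.out.eq]
        rw [this, map_smul, val_op_smul]
        simp only [unop_op, val_compress]
        rw [← mul_assoc, ← mul_assoc, right_absorb, mul_assoc _ y c]
    have uniq : ∀ z w : C, (∀ c, z * c * e = w * c * e) → z = w := by
      intro z w h
      rw [← sub_eq_zero]
      apply hi
      intro c
      rw [sub_mul, sub_mul, h, sub_self]
    choose! F hF using key
    let f : idl e →ₗ[Cᵐᵒᵖ] C :=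
      { toFun := fun t => F t.1
        map_add' := fun s t => by
          apply uniq
          intro c
          have h : compress 1 e ((s.1 + t.1) * c) =
            compress 1 e (s.1 * c) + compress 1 e (t.1 * c) := hext (by simp [add_mul])
          rw [hF _ (s + t).2, add_mul, add_mul, hF _ s.2, hF _ t.2, ← val_add, ← map_add, ← h]
          rfl
        map_smul' := fun a t => by
          apply uniq
          intro c
          rw [hF _ (a • t).2]
          have : (RingHom.id Cᵐᵒᵖ a • F t.1) = F t.1 * a.unop := rfl
          rw [this, mul_assoc (F t.1), hF _ t.2, ← mul_assoc]
          rfl }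
    obtain ⟨c, hc⟩ := hs f
    refine ⟨c, fun x => ?_⟩
    have hx : x.val ∈ idl e := by
      have := idl_gen e x.val 1
      rwa [right_absorb, mul_one] at this
    have h1 : F x.val = c * x.val := hc ⟨x.val, hx⟩
    rw [← h1]
    apply uniq
    intro c
    rw [hF _ hx]
    have : compress 1 e (x.val * c) = op (compress e e c) • x := by
      refine hext ?_
      simp only [val_compress, val_op_smul, unop_op, one_mul]
      rw [← mul_assoc, ← mul_assoc, right_absorb]
    rw [this, map_smul, val_op_smul]
    simp only [unop_op, val_compress]
    rw [← mul_assoc, ← mul_assoc, right_absorb]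
  · have hmem : ∀ x : Hand (1 : C) e, x.val ∈ idl e := by
      intro x
      have := idl_gen e x.val 1
      rwa [right_absorb, mul_one] at this
    have hf : ∀ (t : idl e) (c : C) (h : t.1 * c ∈ idl e), f ⟨t.1 * c, h⟩ = f t * c :=
      fun t c h => f.map_smul (op c) t
    let g : Module.End (Hand e e)ᵐᵒᵖ (Hand (1 : C) e) :=
      { toFun := fun x => ⟨f ⟨x.val, hmem x⟩, by
          rw [one_mul, ← hf ⟨x.val, hmem x⟩ e (by rw [right_absorb]; exact hmem x)]
          congr 2
          exact right_absorb x⟩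
        map_add' := fun x y => hext (f.map_add ⟨x.val, hmem x⟩ ⟨y.val, hmem y⟩)
        map_smul' := fun a x => hext (f.map_smul (op a.unop.val) ⟨x.val, hmem x⟩) }
    obtain ⟨c, hc⟩ := hs g
    refine ⟨c, fun x => ?_⟩
    obtain ⟨t, ht⟩ := x
    have : ∃ h : t ∈ idl e, f ⟨t, h⟩ = c * t := by
      refine idl_induction (P := fun t => ∃ h : t ∈ idl e, f ⟨t, h⟩ = c * t) ?_ ?_ ?_ ?_ ht
      · exact ⟨zero_mem _, by rw [mul_zero]; exact f.map_zero⟩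
      · rintro x y ⟨hx, hx'⟩ ⟨hy, hy'⟩
        exact ⟨add_mem hx hy, by rw [mul_add, ← hx', ← hy']; exact f.map_add ⟨x, hx⟩ ⟨y, hy⟩⟩
      · rintro x ⟨hx, hx'⟩
        exact ⟨neg_mem hx, by rw [mul_neg, ← hx']; exact f.map_neg ⟨x, hx⟩⟩
      · intro x y
        refine ⟨idl_gen e x y, ?_⟩
        have h1 : (compress 1 e x).val = x * e := by simp
        have h2 : f ⟨(compress 1 e x).val, hmem _⟩ = c * (compress 1 e x).val :=
          hc (compress 1 e x)
        have h3 : (⟨x * e * y, idl_gen e x y⟩ : idl e) =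
          ⟨(compress 1 e x).val * y, by rw [h1]; exact idl_gen e x y⟩ := by
          apply Subtype.ext; simp
        rw [h3, hf ⟨(compress 1 e x).val, hmem _⟩ y, h2, h1, mul_assoc]
    exact this.2

/-- `p = ∑ nᵢ mᵢ` with `nᵢ ∈ pCq`, `mᵢ ∈ qCp`. -/
def Full (p q : C) : Prop := ∃ (k : ℕ) (n : Fin k → Hand p q) (m : Fin k → Hand q p),
  ∑ i, (n i).val * (m i).val = p

section Pair

variable {p q : C} [hp : Fact (IsIdempotentElem p)] [hq : Fact (IsIdempotentElem q)]

lemma full_iff (hpq : p + q = 1) : Subsingleton (CBar q) ↔ Full p q := by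
  constructor
  · intro h
    have hmem : p ∈ idl q := by
      rw [mem_idl, ← cbarMk_eq_zero_iff]; exact h.elim _ _
    have : ∃ (k : ℕ) (n : Fin k → Hand p q) (m : Fin k → Hand q p),
        ∑ i, (n i).val * (m i).val = p * p * p := by
      refine idl_induction (P := fun t => ∃ (k : ℕ) (n : Fin k → Hand p q) (m : Fin k → Hand q p),
        ∑ i, (n i).val * (m i).val = p * t * p) ?_ ?_ ?_ ?_ hmem
      · exact ⟨0, fun _ => 0, fun _ => 0, by simp⟩
      · rintro x y ⟨k, n, m, h⟩ ⟨k', n', m', h'⟩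
        refine ⟨k + k', Fin.append n n', Fin.append m m', ?_⟩
        rw [Fin.sum_univ_add]
        simp only [Fin.append_left, Fin.append_right]
        rw [h, h', mul_add, add_mul]
      · rintro x ⟨k, n, m, h⟩
        refine ⟨k, fun i => - n i, m, ?_⟩
        simp only [val_neg, neg_mul, Finset.sum_neg_distrib, h, mul_neg]
      · intro x y
        refine ⟨1, fun _ => compress p q x, fun _ => compress q p y, ?_⟩
        simp only [Finset.univ_unique, Finset.sum_singleton, val_compress, mul_assoc]
        rw [← mul_assoc q q, hq.out.eq]
    rwa [hp.out.eq, hp.out.eq] at this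
  · rintro ⟨k, n, m, h⟩
    have h1 : (1 : C) ∈ idl q := by
      rw [← hpq]
      refine add_mem ?_ (by simpa using idl_gen q 1 1)
      rw [← h]
      refine sum_mem fun i _ => ?_
      rw [← right_absorb (n i)]
      exact idl_gen q _ _
    have h2 : cbarMk q 1 = 0 := (cbarMk_eq_zero_iff q 1).2 ((mem_idl _ _).1 h1)
    rw [map_one] at h2
    exact subsingleton_of_zero_eq_one h2.symm

/-- `Hom_R(P, R)`, right modules. -/
abbrev RHom (R : Type) [Ring R] (P : Type) [AddCommGroup P] [Module Rᵐᵒᵖ P] : Type :=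
  P →ₗ[Rᵐᵒᵖ] R

lemma rhom_smul (l : RHom (Hand q q) (Hand p q)) (x : Hand p q) (b : Hand q q) :
    (l (hmul x b)).val = (l x).val * b.val := congrArg val (l.map_smul (op b) x)

/-- Left multiplication by an element of `qCp`, as a map `pCq → qCq`. -/
def mL (m : Hand q p) : RHom (Hand q q) (Hand p q) where
  toFun x := hmul m x
  map_add' x y := hext (mul_add m.val x.val y.val)
  map_smul' b x := hext (mul_assoc m.val x.val b.unop.val).symm

lemma pq_zero (hpq : p + q = 1) : p * q = 0 := by
  have : p * (p + q) = p := by rw [hpq, mul_one]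
  rw [mul_add, hp.out.eq] at this
  simpa using this

lemma qp_zero (hpq : p + q = 1) : q * p = 0 := pq_zero (by rw [add_comm]; exact hpq)

lemma rep (hpq : p + q = 1) (hs : ASurj q) (l : RHom (Hand q q) (Hand p q)) :
    ∃ m : Hand q p, l = mL m := by
  let g : Module.End (Hand q q)ᵐᵒᵖ (Hand (1 : C) q) :=
    { toFun := fun x => ⟨(l (hmul (compress p 1 1) x)).val, by
        rw [one_mul, right_absorb]⟩
      map_add' := fun x y => by
        have : hmul (compress p 1 (1 : C)) (x + y) = hmul (compress p 1 1) x +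
          hmul (compress p 1 1) y := hext (mul_add _ _ _)
        refine hext ?_
        change (l (hmul (compress p 1 1) (x + y))).val = _
        rw [this, map_add]; rfl
      map_smul' := fun b x => by
        have : hmul (compress p 1 (1 : C)) (b • x) = hmul (hmul (compress p 1 1) x) b.unop :=
          hext (mul_assoc _ _ _).symm
        refine hext ?_
        change (l (hmul (compress p 1 1) (b • x))).val = _
        rw [this, rhom_smul]; rfl }
  obtain ⟨c, hc⟩ := hs g
  refine ⟨compress q p c, LinearMap.ext fun n => hext ?_⟩
  have h1 := hc ⟨n.val, by rw [one_mul, right_absorb]⟩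
  have h2 : (l n).val = c * n.val := by
    rw [← show _ = c * n.val from h1]
    change _ = (l _).val
    congr 2
    refine hext ?_
    change _ = p * 1 * 1 * n.val
    rw [mul_one, mul_one, left_absorb]
  change _ = q * c * p * n.val
  rw [mul_assoc, left_absorb, mul_assoc, ← h2, left_absorb]

lemma generator_of_full (h : Full p q) : IsRGenerator (Hand p p) (Hand q p) := by
  obtain ⟨k, n, m, h⟩ := h
  refine ⟨k, { toFun := fun x => ∑ i, hmul (n i) (x i), map_add' := ?_, map_smul' := ?_ },
    { toFun := fun a i => hmul (m i) a, map_add' := ?_, map_smul' := ?_ }, ?_⟩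
  · intro x y
    refine hext ?_
    simp [mul_add, Finset.sum_add_distrib]
  · intro a x
    refine hext ?_
    change _ = (∑ i, hmul (n i) (x i)).val * a.unop.val
    simp [Finset.sum_mul, mul_assoc]
  · intro x y
    funext i
    exact hext (mul_add _ _ _)
  · intro a x
    funext i
    exact hext (mul_assoc _ _ _).symm
  · refine LinearMap.ext fun a => hext ?_
    change (∑ i, hmul (n i) (hmul (m i) a)).val = a.val
    simp only [val_sum, val_hmul, ← mul_assoc]
    rw [← Finset.sum_mul, h, left_absorb]

lemma full_of_generator (hpq : p + q = 1) (hs : ASurj p)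
    (h : IsRGenerator (Hand p p) (Hand q p)) : Full p q := by
  obtain ⟨k, f, s, hfs⟩ := h
  have hr : ∀ i, ∃ n : Hand p q, ∀ x : Hand q p, f (Pi.single i x) = hmul n x := by
    intro i
    have : p + q = 1 := hpq
    obtain ⟨n, hn⟩ := rep (p := q) (q := p) (by rw [add_comm]; exact hpq) hs
      (f.comp (LinearMap.single (Hand p p)ᵐᵒᵖ (fun _ : Fin k => Hand q p) i))
    exact ⟨n, fun x => congrArg (fun l => l x) hn⟩
  choose n hn using hr
  refine ⟨k, n, fun i => s 1 i, ?_⟩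
  have h1 : f (s 1) = 1 := congrArg (fun l => l 1) hfs
  have h2 : s 1 = ∑ i, Pi.single i (s 1 i) := (Finset.univ_sum_single _).symm
  rw [h2, map_sum] at h1
  have h3 := congrArg val h1
  rw [val_sum] at h3
  simp only [hn, val_hmul] at h3
  exact h3

end Pair

section Pair2

variable {p q : C} [hp : Fact (IsIdempotentElem p)] [hq : Fact (IsIdempotentElem q)]

lemma ainj_of_full (hpq : p + q = 1) (hF : Full p q) : AInj q := by
  obtain ⟨k, n, m, h⟩ := hF
  intro c hc
  rw [← mul_one c, ← hpq, mul_add, ← h, Finset.mul_sum]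
  have h1 : c * q = 0 := by simpa using hc 1
  rw [h1, add_zero]
  refine Finset.sum_eq_zero fun i _ => ?_
  rw [← right_absorb (n i), ← mul_assoc, ← mul_assoc, hc, zero_mul]

lemma end_smul {r : C} [hr : Fact (IsIdempotentElem r)]
    (g : Module.End (Hand q q)ᵐᵒᵖ (Hand r q)) (x : Hand r q) (b : Hand q q) :
    (g (hmul x b)).val = (g x).val * b.val := congrArg val (g.map_smul (op b) x)

/-- Inclusion of a corner. -/
def up (x : Hand p q) : Hand (1 : C) q := ⟨x.val, by rw [one_mul, right_absorb]⟩

@[simp] lemma val_up (x : Hand p q) : (up x).val = x.val := rfl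

lemma asurj_of_full (hpq : p + q = 1) (hF : Full p q) : ASurj q := by
  obtain ⟨k, n, m, h⟩ := hF
  intro g
  refine ⟨(g (up (1 : Hand q q))).val + ∑ i, (g (up (n i))).val * (m i).val, fun x => ?_⟩
  have hx : x = hmul (up (1 : Hand q q)) (compress q q x.val) +
      ∑ i, hmul (up (n i)) (compress q q ((m i).val * x.val)) := by
    refine hext ?_
    simp only [val_add, val_sum, val_hmul, val_up, val_one, val_compress]
    have h1 : ∀ i, (n i).val * (q * ((m i).val * x.val) * q) = (n i).val * (m i).val * x.val := by
      intro i
      rw [← mul_assoc q, left_absorb, mul_assoc _ x.val q, right_absorb, mul_assoc]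
    simp only [h1]
    rw [← Finset.sum_mul, h, mul_assoc q x.val q, right_absorb, ← mul_assoc, hq.out.eq,
      ← add_mul, add_comm q p, hpq, one_mul]
  conv_lhs => rw [hx]
  rw [map_add, map_sum, val_add, val_sum, add_mul, Finset.sum_mul]
  simp only [end_smul, val_compress]
  congr 1
  · rw [mul_assoc q x.val q, right_absorb, ← mul_assoc, right_absorb]
  · refine Finset.sum_congr rfl fun i _ => ?_
    rw [← mul_assoc q, left_absorb, mul_assoc _ x.val q, right_absorb, mul_assoc]

lemma finproj_of_full (hF : Full p q) :
    Module.Finite (Hand q q)ᵐᵒᵖ (Hand p q) ∧ Module.Projective (Hand q q)ᵐᵒᵖ (Hand p q) := by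
  obtain ⟨k, n, m, h⟩ := hF
  let s : Hand p q →ₗ[(Hand q q)ᵐᵒᵖ] (Fin k → (Hand q q)ᵐᵒᵖ) :=
    { toFun := fun x i => op (hmul (m i) x)
      map_add' := fun x y => by
        funext i
        exact congrArg op (hext (mul_add _ _ _))
      map_smul' := fun b x => by
        funext i
        exact congrArg op (hext (mul_assoc _ _ _).symm) }
  let f : (Fin k → (Hand q q)ᵐᵒᵖ) →ₗ[(Hand q q)ᵐᵒᵖ] Hand p q :=
    { toFun := fun x => ∑ i, x i • n i
      map_add' := fun x y => by simp [add_smul, Finset.sum_add_distrib]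
      map_smul' := fun b x => by simp [Finset.smul_sum, mul_smul] }
  have hfs : f.comp s = LinearMap.id := by
    refine LinearMap.ext fun x => hext ?_
    change (∑ i, op (hmul (m i) x) • n i).val = x.val
    simp only [val_sum, val_op_smul, unop_op, val_hmul, ← mul_assoc]
    rw [← Finset.sum_mul, h, left_absorb]
  refine ⟨Module.Finite.of_surjective f fun x => ⟨s x, congrArg (fun l => l x) hfs⟩,
    Module.Projective.of_split s f hfs⟩

/-- The element of `qCp` representing a functional. -/
def cm {k : ℕ} (n : Fin k → Hand p q) (m : Fin k → Hand q p)
    (l : RHom (Hand q q) (Hand p q)) : Hand q p := ∑ i, hmul (l (n i)) (m i)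

lemma cm_add {k : ℕ} {n : Fin k → Hand p q} {m : Fin k → Hand q p}
    (l l' : RHom (Hand q q) (Hand p q)) : cm n m (l + l') = cm n m l + cm n m l' := by
  refine hext ?_
  simp [cm, add_mul, Finset.sum_add_distrib]

section Data

variable {k : ℕ} {n : Fin k → Hand p q} {m : Fin k → Hand q p}

lemma expand (h : ∑ i, (n i).val * (m i).val = p) (x : Hand p q) : x = ∑ i, hmul (n i) (hmul (m i) x) := by
  refine hext ?_
  simp only [val_sum, val_hmul, ← mul_assoc]
  rw [← Finset.sum_mul, h, left_absorb]

lemma cm_apply (h : ∑ i, (n i).val * (m i).val = p) (l : RHom (Hand q q) (Hand p q)) (x : Hand p q) :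
    (cm n m l).val * x.val = (l x).val := by
  conv_rhs => rw [expand h x]
  rw [map_sum, val_sum]
  simp only [rhom_smul, cm, val_sum, val_hmul, Finset.sum_mul, mul_assoc]

lemma cm_eq (h : ∑ i, (n i).val * (m i).val = p) (l : RHom (Hand q q) (Hand p q)) : mL (cm n m l) = l :=
  LinearMap.ext fun x => hext (cm_apply h l x)

lemma cancelN (h : ∑ i, (n i).val * (m i).val = p) {u v : C} (hu : u * p = u) (hv : v * p = v)
    (H : ∀ x : Hand p q, u * x.val = v * x.val) : u = v := by
  rw [← hu, ← hv, ← h, Finset.mul_sum, Finset.mul_sum]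
  refine Finset.sum_congr rfl fun i _ => ?_
  rw [← mul_assoc, ← mul_assoc, H]

lemma cm_mL (h : ∑ i, (n i).val * (m i).val = p) (x : Hand q p) : cm n m (mL x) = x := by
  refine hext (cancelN h (right_absorb _) (right_absorb _) fun y => ?_)
  rw [cm_apply h]; rfl

end Data

/-- The ring map `B → End(Hom(N, B))`. -/
def wmap (p q : C) [hp : Fact (IsIdempotentElem p)] [hq : Fact (IsIdempotentElem q)] :
    Hand q q →+* Module.End (Module.End (Hand q q)ᵐᵒᵖ (Hand p q))ᵐᵒᵖ
      (RHom (Hand q q) (Hand p q)) where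
  toFun b :=
    { toFun := fun l =>
        { toFun := fun x => b * l x
          map_add' := fun x y => by rw [map_add, mul_add]
          map_smul' := fun a x => by
            rw [map_smul]
            exact (mul_assoc _ _ _).symm }
      map_add' := fun l l' => LinearMap.ext fun x => mul_add _ _ _
      map_smul' := fun a l => rfl }
  map_one' := LinearMap.ext fun l => LinearMap.ext fun x => one_mul _
  map_mul' a b := LinearMap.ext fun l => LinearMap.ext fun x => mul_assoc _ _ _
  map_zero' := LinearMap.ext fun l => LinearMap.ext fun x => zero_mul _
  map_add' a b := LinearMap.ext fun l => LinearMap.ext fun x => add_mul _ _ _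

/-- Left multiplication by an element of `A = pCp` on `N = pCq`. -/
def aL (a : Hand p p) : Module.End (Hand q q)ᵐᵒᵖ (Hand p q) where
  toFun x := hmul a x
  map_add' x y := hext (mul_add a.val x.val y.val)
  map_smul' b x := hext (mul_assoc a.val x.val b.unop.val).symm

lemma wedderburn_of_full (hpq : p + q = 1) (hF : Full p q) (hi : AInj p) (hs : ASurj p) :
    IsWedderburnProjective (Hand q q) (Hand p q) := by
  refine ⟨(finproj_of_full hF).1, (finproj_of_full hF).2, wmap p q, fun r l x => rfl, ?_, ?_⟩
  · obtain ⟨k, n, m, h⟩ := hF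
    rw [injective_iff_map_eq_zero]
    intro b hb
    refine hext (hi _ fun x => ?_)
    have h1 : b.val * x * p = b.val * (compress q p x).val := by
      rw [val_compress, ← mul_assoc, ← mul_assoc, right_absorb]
    rw [h1]
    refine cancelN h (by rw [mul_assoc, right_absorb]) (zero_mul _) fun y => ?_
    have h2 : wmap p q b (mL (compress q p x)) y = 0 := by rw [hb]; rfl
    rw [zero_mul, mul_assoc]
    exact congrArg val h2
  · obtain ⟨k, n, m, h⟩ := hF
    intro Ψ
    have hΨ : ∀ (l : RHom (Hand q q) (Hand p q)) (φ : Module.End (Hand q q)ᵐᵒᵖ (Hand p q))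
        (x : Hand p q), Ψ (l.comp φ) x = Ψ l (φ x) := by
      intro l φ x
      exact congrArg (fun l => l x) (Ψ.map_smul (op φ) l)
    let g : Module.End (Hand p p)ᵐᵒᵖ (Hand (1 : C) p) :=
      { toFun := fun x => up (cm n m (Ψ (mL (compress q p x.val))))
        map_add' := fun x y => by
          have h1 : mL (compress q p (x + y).val) =
              mL (compress q p x.val) + mL (compress q p y.val) :=
            LinearMap.ext fun z => hext (by
              change q * (x.val + y.val) * p * z.val =
                q * x.val * p * z.val + q * y.val * p * z.val
              rw [mul_add, add_mul, add_mul])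
          rw [h1, map_add, cm_add]
          rfl
        map_smul' := fun a x => by
          refine hext ?_
          change (cm n m (Ψ (mL (compress q p (x.val * a.unop.val))))).val =
            (cm n m (Ψ (mL (compress q p x.val)))).val * a.unop.val
          have h1 : mL (compress q p (x.val * a.unop.val)) =
              (mL (compress q p x.val)).comp (aL (q := q) a.unop) :=
            LinearMap.ext fun z => hext (by
              change q * (x.val * a.unop.val) * p * z.val =
                q * x.val * p * (a.unop.val * z.val)
              rw [mul_assoc q (x.val * _), mul_assoc x.val, right_absorb, mul_assoc q x.val,
                right_absorb]
              simp only [mul_assoc])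
          rw [h1]
          refine cancelN h (right_absorb _) (by rw [mul_assoc, right_absorb]) fun y => ?_
          rw [cm_apply h, hΨ, mul_assoc]
          exact (cm_apply h (Ψ (mL (compress q p x.val))) (aL a.unop y)).symm }
    obtain ⟨c, hc⟩ := hs g
    refine ⟨compress q q c, LinearMap.ext fun l => LinearMap.ext fun x => hext ?_⟩
    change q * c * q * (l x).val = (Ψ l x).val
    have h1 := hc (up (cm n m l))
    have h2 : compress q p (cm n m l).val = cm n m l := hext (by
      rw [val_compress, left_absorb, right_absorb])
    have h3 : (cm n m (Ψ (mL (compress q p (cm n m l).val)))).val = c * (cm n m l).val := h1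
    rw [h2, cm_eq h] at h3
    rw [mul_assoc, left_absorb, ← cm_apply h, ← cm_apply h (Ψ l), mul_assoc q c, ← mul_assoc c,
      ← h3, ← mul_assoc, left_absorb]

lemma full_of_finproj (hpq : p + q = 1) (hi : AInj q) (hs : ASurj q)
    (h1 : Module.Finite (Hand q q)ᵐᵒᵖ (Hand p q))
    (h2 : Module.Projective (Hand q q)ᵐᵒᵖ (Hand p q)) : Full p q := by
  obtain ⟨k, f, g, -, -, hfg⟩ := Module.Finite.exists_comp_eq_id_of_projective
    (Hand q q)ᵐᵒᵖ (Hand p q)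
  let l : Fin k → RHom (Hand q q) (Hand p q) := fun i =>
    { toFun := fun x => (g x i).unop
      map_add' := fun x y => by rw [map_add]; rfl
      map_smul' := fun b x => by rw [map_smul]; rfl }
  choose m hm using fun i => rep hpq hs (l i)
  let n : Fin k → Hand p q := fun i => f (Pi.single i 1)
  have hx : ∀ x : Hand p q, x.val = (∑ i, (n i).val * (m i).val) * x.val := by
    intro x
    have h3 : f (g x) = x := congrArg (fun l => l x) hfg
    have h4 : g x = ∑ i, g x i • Pi.single i (1 : (Hand q q)ᵐᵒᵖ) := by
      conv_lhs => rw [← Finset.univ_sum_single (g x)]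
      refine Finset.sum_congr rfl fun i _ => ?_
      rw [← Pi.single_smul, smul_eq_mul, mul_one]
    rw [h4, map_sum] at h3
    conv_lhs => rw [← h3]
    rw [val_sum, Finset.sum_mul]
    refine Finset.sum_congr rfl fun i _ => ?_
    rw [map_smul, val_op_smul, mul_assoc]
    congr 1
    have h5 : l i x = mL (m i) x := by rw [hm]
    exact congrArg val h5
  refine ⟨k, n, m, ?_⟩
  symm
  rw [← sub_eq_zero]
  apply hi
  intro x
  have h6 := hx (compress p q x)
  have h7 : (∑ i, (n i).val * (m i).val) * p = ∑ i, (n i).val * (m i).val := by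
    rw [Finset.sum_mul]
    refine Finset.sum_congr rfl fun i _ => ?_
    rw [mul_assoc, right_absorb]
  rw [val_compress, ← mul_assoc, ← mul_assoc, h7] at h6
  rw [sub_mul, sub_mul, h6, sub_self]

lemma end_of_wedderburn (hpq : p + q = 1) (hF : Full p q)
    (hw : IsWedderburnProjective (Hand q q) (Hand p q)) :
    (∀ b : Hand q q, (∀ x : Hand q p, b.val * x.val = 0) → b = 0) ∧
    (∀ ψ : Module.End (Hand p p)ᵐᵒᵖ (Hand q p), ∃ b : Hand q q, ∀ x, (ψ x).val = b.val * x.val) := by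
  obtain ⟨-, -, Φ, hΦ, hinj, hsurj⟩ := hw
  obtain ⟨k, n, m, h⟩ := hF
  constructor
  · intro b hb
    apply hinj
    rw [map_zero]
    refine LinearMap.ext fun l => LinearMap.ext fun x => hext ?_
    rw [hΦ, val_mul, ← cm_apply h, ← mul_assoc, hb, zero_mul]
    rfl
  · intro ψ
    let Ψ : Module.End (Module.End (Hand q q)ᵐᵒᵖ (Hand p q))ᵐᵒᵖ (RHom (Hand q q) (Hand p q)) :=
      { toFun := fun l => mL (ψ (cm n m l))
        map_add' := fun l l' => by
          rw [cm_add, map_add]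
          exact LinearMap.ext fun x => hext (add_mul _ _ _)
        map_smul' := fun φ l => by
          refine LinearMap.ext fun x => hext ?_
          change (ψ (cm n m (l.comp φ.unop))).val * x.val =
            (ψ (cm n m l)).val * (φ.unop x).val
          have ha : ∀ y : Hand p q,
              (∑ i, hmul (φ.unop (n i)) (m i)).val * y.val = (φ.unop y).val := by
            intro y
            conv_rhs => rw [expand h y]
            rw [map_sum, val_sum]
            simp only [end_smul, val_sum, val_hmul, Finset.sum_mul, mul_assoc]
          have h1 : cm n m (l.comp φ.unop) =
              hmul (cm n m l) (∑ i, hmul (φ.unop (n i)) (m i)) := by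
            refine hext (cancelN h (right_absorb _) (right_absorb _) fun y => ?_)
            rw [cm_apply h, val_hmul, mul_assoc, ha, cm_apply h]
            rfl
          rw [h1, end_smul, mul_assoc, ha] }
    obtain ⟨b, hb⟩ := hsurj Ψ
    refine ⟨b, fun x => ?_⟩
    refine cancelN h (right_absorb _) (by rw [mul_assoc, right_absorb]) fun y => ?_
    have h1 : Φ b (mL x) y = Ψ (mL x) y := by rw [hb]
    rw [hΦ] at h1
    have h2 : b.val * (x.val * y.val) = (ψ (cm n m (mL x))).val * y.val := congrArg val h1
    rw [cm_mL h] at h2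
    rw [← h2, mul_assoc]

lemma auslander_of_wedderburn (hpq : p + q = 1) (hF : Full p q) (hi : AInj q)
    (hw : IsWedderburnProjective (Hand q q) (Hand p q)) : AInj p ∧ ASurj p := by
  obtain ⟨hbi, hbs⟩ := end_of_wedderburn hpq hF hw
  obtain ⟨k, n, m, h⟩ := hF
  constructor
  · intro c hc
    apply hi
    intro x
    have hb : ∀ y, q * y * (c * x * q) = 0 := by
      intro y
      have h1 : compress q q (y * c * x) = 0 := by
        apply hbi
        intro z
        rw [val_compress, mul_assoc, left_absorb, ← right_absorb z]
        have : q * (y * c * x) * (z.val * p) = q * y * (c * (x * z.val) * p) := by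
          simp only [mul_assoc]
        rw [this, hc, mul_zero]
      have h2 : q * (y * c * x) * q = 0 := congrArg val h1
      simpa only [mul_assoc] using h2
    have h3 : p * (c * x * q) = 0 := by
      rw [← h, Finset.sum_mul]
      refine Finset.sum_eq_zero fun i _ => ?_
      rw [← left_absorb (m i), mul_assoc, hb, mul_zero]
    have h4 : q * (c * x * q) = 0 := by simpa using hb 1
    rw [← one_mul (c * x * q), ← hpq, add_mul, h3, h4, add_zero]
  · intro g
    have hy : ∀ y : C, ∃ b : Hand q q, ∀ x : Hand q p, q * y * (g (up x)).val = b.val * x.val := by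
      intro y
      let ψ : Module.End (Hand p p)ᵐᵒᵖ (Hand q p) :=
        { toFun := fun x => hmul (compress q 1 y) (g (up x))
          map_add' := fun x x' => by
            have : up (x + x') = up x + up x' := rfl
            rw [this, map_add]
            exact hext (mul_add _ _ _)
          map_smul' := fun a x => by
            have : up (a • x) = a • up x := rfl
            rw [this, map_smul]
            exact hext (mul_assoc _ _ _).symm }
      obtain ⟨b, hb⟩ := hbs ψ
      refine ⟨b, fun x => ?_⟩
      rw [← hb]
      change _ = q * y * 1 * _
      rw [mul_one]
    choose b hb using hy
    have hc' : ∀ x : Hand q p,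
        ((b 1).val + ∑ i, (n i).val * (b (m i).val).val) * x.val = (g (up x)).val := by
      intro x
      rw [add_mul, Finset.sum_mul, ← hb, mul_one]
      have h1 : ∑ i, (n i).val * (b (m i).val).val * x.val = p * (g (up x)).val := by
        have h2 := congrArg (fun t => t * (g (up x)).val) h
        simp only [Finset.sum_mul] at h2
        rw [← h2]
        refine Finset.sum_congr rfl fun i _ => ?_
        rw [mul_assoc, ← hb, left_absorb, mul_assoc]
      rw [h1, ← add_mul, add_comm, hpq, one_mul]
    refine ⟨(g (up (1 : Hand p p))).val * p +
      ((b 1).val + ∑ i, (n i).val * (b (m i).val).val) * q, fun x => ?_⟩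
    have hx : x = hmul (up (1 : Hand p p)) (compress p p x.val) + up (compress q p x.val) := by
      refine hext ?_
      simp only [val_add, val_hmul, val_up, val_one, val_compress]
      rw [mul_assoc p x.val, right_absorb, mul_assoc q, right_absorb, ← mul_assoc, hp.out.eq,
        ← add_mul, hpq, one_mul]
    conv_lhs => rw [hx]
    rw [map_add, val_add, end_smul, ← hc', add_mul]
    simp only [val_compress]
    rw [mul_assoc p x.val, right_absorb, mul_assoc q, right_absorb]
    simp only [add_mul, mul_assoc]

/-- The ring map `B → C/CpC`. -/
def bmap (hpq : p + q = 1) : Hand q q →+* CBar p where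
  toFun b := cbarMk p b.val
  map_one' := by
    have h1 : cbarMk p p = 0 := (cbarMk_eq_zero_iff p p).2 (TwoSidedIdeal.subset_span rfl)
    have h2 : cbarMk p (p + q) = 1 := by rw [hpq, map_one]
    rw [map_add, h1, zero_add] at h2
    exact h2
  map_mul' a b := map_mul _ _ _
  map_zero' := map_zero _
  map_add' a b := map_add _ _ _

lemma trace_equiv (hpq : p + q = 1) (hs : ASurj q) :
    Nonempty (CBar p ≃+* (traceIdeal (Hand q q) (Hand p q)).ringCon.Quotient) := by
  have hle : (traceIdeal (Hand q q) (Hand p q)) ≤ TwoSidedIdeal.ker (bmap hpq) := by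
    refine TwoSidedIdeal.span_le.2 ?_
    rintro _ ⟨l, x, rfl⟩
    obtain ⟨m, rfl⟩ := rep hpq hs l
    refine (TwoSidedIdeal.mem_ker _).2 ?_
    refine (cbarMk_eq_zero_iff p _).2 ?_
    rw [← mem_idl]
    change m.val * x.val ∈ _
    rw [← right_absorb m]
    exact idl_gen p _ _
  have hge : ∀ b : Hand q q, bmap hpq b = 0 → b ∈ traceIdeal (Hand q q) (Hand p q) := by
    intro b hb
    have h1 : b.val ∈ idl p := (mem_idl _ _).2 ((cbarMk_eq_zero_iff p _).1 hb)
    have h2 : compress q q b.val ∈ traceIdeal (Hand q q) (Hand p q) := by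
      refine idl_induction (P := fun t => compress q q t ∈ traceIdeal (Hand q q) (Hand p q))
        ?_ ?_ ?_ ?_ h1
      · rw [show compress q q (0 : C) = 0 from hext (by simp)]
        exact TwoSidedIdeal.zero_mem _
      · intro x y hx hy
        rw [show compress q q (x + y) = compress q q x + compress q q y from
          hext (by simp [mul_add, add_mul])]
        exact TwoSidedIdeal.add_mem _ hx hy
      · intro x hx
        rw [show compress q q (-x) = - compress q q x from hext (by simp)]
        exact TwoSidedIdeal.neg_mem _ hx
      · intro x y
        refine TwoSidedIdeal.subset_span ⟨mL (compress q p x), compress p q y, hext ?_⟩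
        change q * (x * p * y) * q = q * x * p * (p * y * q)
        rw [← mul_assoc (q * x * p), ← mul_assoc (q * x * p), mul_assoc (q * x) p p, hp.out.eq]
        simp only [mul_assoc]
    rwa [show compress q q b.val = b from hext (by
      rw [val_compress, left_absorb, right_absorb])] at h2
  have hle' : (traceIdeal (Hand q q) (Hand p q)).ringCon ≤ RingCon.ker (bmap hpq) := by
    intro x y hxy
    have h1 := hle ((TwoSidedIdeal.rel_iff _ _ _).1 hxy)
    have h2 := (TwoSidedIdeal.mem_ker _).1 h1
    rw [map_sub, sub_eq_zero] at h2
    exact h2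
  refine ⟨(RingEquiv.ofBijective (RingCon.lift _ (bmap hpq) hle') ⟨?_, ?_⟩).symm⟩
  · rw [injective_iff_map_eq_zero]
    intro x
    refine Quotient.inductionOn' x fun b hb => ?_
    have h1 := hge b hb
    exact (RingCon.eq _).2 ((TwoSidedIdeal.rel_iff _ _ _).2 (by simpa using h1))
  · intro x
    obtain ⟨c, rfl⟩ := cbarMk_surjective p x
    refine ⟨RingCon.mk' _ (compress q q c), ?_⟩
    rw [RingCon.lift_mk']
    change cbarMk p (q * c * q) = _
    have hp0 : cbarMk p p = 0 := (cbarMk_eq_zero_iff p p).2 (TwoSidedIdeal.subset_span rfl)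
    have hq1 : cbarMk p q = 1 := (bmap hpq).map_one
    rw [map_mul, map_mul, hq1, one_mul, mul_one]

end Pair2

/-- For a Morita context `(C, e)` with `A = eCe`, `B = e'Ce'`,
`M = e'Ce`, `N = eCe'`, the following are equivalent:
(1) `(C, e)` is a Wedderburn context: `C̄' = C/Ce'C = 0` and `grade_C(C̄) ≥ 2`;
(2) `(C, e)` is a right Auslander context (the natural map `C → End_A(Ce)`,
`Ce ≅ M ⊕ A`, is an isomorphism) and `M` is an `A`-generator;
(3) `(C, e')` is a right Auslander context (the natural map `C → End_B(Ce')`,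
`Ce' ≅ N ⊕ B`, is an isomorphism) and `N` is a Wedderburn projective over `B`.
Moreover in case (3), `C̄ ≅ B/τ_N(B)`, the quotient of `B` by the trace ideal of `N`. -/
theorem wedderburn_context_characterizations
    (C : Type) [Ring C] (e : C) [Fact (IsIdempotentElem e)] :
    ((Subsingleton (CBar (1 - e)) ∧ 2 ≤ rgrade C (CBar e)) ↔
      ((∃ α : C →+* Module.End (Hand e e)ᵐᵒᵖ (Hand (1 : C) e),
          (∀ (c : C) (x : Hand (1 : C) e), (α c x).val = c * x.val)
          ∧ Function.Bijective α)
        ∧ IsRGenerator (Hand e e) (Hand (1 - e) e)))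
    ∧ ((Subsingleton (CBar (1 - e)) ∧ 2 ≤ rgrade C (CBar e)) ↔
      ((∃ α' : C →+* Module.End (Hand (1 - e) (1 - e))ᵐᵒᵖ (Hand (1 : C) (1 - e)),
          (∀ (c : C) (x : Hand (1 : C) (1 - e)), (α' c x).val = c * x.val)
          ∧ Function.Bijective α')
        ∧ IsWedderburnProjective (Hand (1 - e) (1 - e)) (Hand e (1 - e))))
    ∧ (((∃ α' : C →+* Module.End (Hand (1 - e) (1 - e))ᵐᵒᵖ (Hand (1 : C) (1 - e)),
          (∀ (c : C) (x : Hand (1 : C) (1 - e)), (α' c x).val = c * x.val)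
          ∧ Function.Bijective α')
        ∧ IsWedderburnProjective (Hand (1 - e) (1 - e)) (Hand e (1 - e))) →
      Nonempty (CBar e ≃+*
        (traceIdeal (Hand (1 - e) (1 - e)) (Hand e (1 - e))).ringCon.Quotient)) := by
  have hpq : e + (1 - e) = 1 := add_sub_cancel e 1
  rw [full_iff hpq, grade_iff_auslander, auslander_iff, auslander_iff]
  refine ⟨⟨?_, ?_⟩, ⟨?_, ?_⟩, ?_⟩
  · rintro ⟨hF, hA⟩
    exact ⟨hA, generator_of_full hF⟩
  · rintro ⟨hA, hG⟩
    exact ⟨full_of_generator hpq hA.2 hG, hA⟩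
  · rintro ⟨hF, hA⟩
    exact ⟨⟨ainj_of_full hpq hF, asurj_of_full hpq hF⟩, wedderburn_of_full hpq hF hA.1 hA.2⟩
  · rintro ⟨hA, hW⟩
    have hF := full_of_finproj hpq hA.1 hA.2 hW.1 hW.2.1
    exact ⟨hF, auslander_of_wedderburn hpq hF hA.1 hW⟩
  · rintro ⟨hA, hW⟩
    exact trace_equiv hpq hA.2

end MoritaHochschild
end
end
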